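/- Let H and K be finitely generated subgroups of F(A) with d = rank(K) − rank(H) > 0. Then H is a free factor of K if and only if there exists 0 ≤ d' ≤ d such that Γ_A(H) can be transformed by a sequence of d' i-steps into Γ_A(L) for some subgroup L with rank(L) = rank(H) + d' and L a graphical free factor of K with respect to A. -/

import Mathlib

open Function

/-- A letter of the symmetrized alphabet Ã: `(a, true)` stands for `a ∈ A` and
`(a, false)` for `a⁻¹ ∈ A⁻¹`. -/
abbrev Ltr (A : Type) := A × Bool

/-- Inversion of letters of Ã. -/
def Ltr.inv {A : Type} (x : Ltr A) : Ltr A := (x.1, !x.2)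

/-- The inverse `u⁻¹` of a word `u` over Ã. -/
def wordInv {A : Type} (w : List (Ltr A)) : List (Ltr A) := (w.map Ltr.inv).reverse

/-- A word over Ã is reduced iff it has no factor of the form `a a⁻¹` or `a⁻¹ a`. -/
def IsReducedWord {A : Type} (w : List (Ltr A)) : Prop :=
  ∀ (u v : List (Ltr A)) (a : A) (b : Bool), w ≠ u ++ (a, b) :: (a, !b) :: v

/-- An automaton over the symmetrized alphabet Ã, with a bundled state type `Q`,
an initial state `q0` and a set `E` of transitions. -/
structure Autom (A : Type) : Type 1 where
  Q : Type
  q0 : Q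
  E : Set (Q × Ltr A × Q)

namespace Autom

variable {A : Type}

/-- Paths using only transitions in the set `T`. -/
inductive PathOn (M : Autom A) (T : Set (M.Q × Ltr A × M.Q)) :
    M.Q → List (Ltr A) → M.Q → Prop
  | nil (q : M.Q) : PathOn M T q [] q
  | cons {p q r : M.Q} {a : Ltr A} {w : List (Ltr A)} :
      (p, a, q) ∈ T → PathOn M T q w r → PathOn M T p (a :: w) r

/-- `M.Path p u q` : the word `u` labels a path from state `p` to state `q` in `M`. -/
def Path (M : Autom A) : M.Q → List (Ltr A) → M.Q → Prop := M.PathOn M.E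

/-- The language L(𝒜) of words labeling a path from `q0` to `q0`. -/
def lang (M : Autom A) : Set (List (Ltr A)) := {w | M.Path M.q0 w M.q0}

/-- The set L(𝒜)ρ of reductions (in the free group `F(A)`) of words of L(𝒜). -/
def langRho (M : Autom A) : Set (FreeGroup A) := FreeGroup.mk '' M.lang

/-- Dual automaton: `(p,a,q)` is an edge iff `(q,a⁻¹,p)` is one. -/
def Dual (M : Autom A) : Prop := ∀ p a q, (p, a, q) ∈ M.E ↔ (q, Ltr.inv a, p) ∈ M.E

/-- Deterministic automaton. -/
def Deterministic (M : Autom A) : Prop :=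
  ∀ p a q q', (p, a, q) ∈ M.E → (p, a, q') ∈ M.E → q = q'

/-- Trim automaton: every state lies on a path from `q0` to `q0`. -/
def Trim (M : Autom A) : Prop := ∀ q, ∃ u v, M.Path M.q0 u q ∧ M.Path q v M.q0

/-- Inverse automaton: deterministic, trim and dual. -/
def IsInv (M : Autom A) : Prop := M.Deterministic ∧ M.Trim ∧ M.Dual

/-- Reduced automaton: every state lies on a path from `q0` to `q0` labeled by
a reduced word. -/
def IsRed (M : Autom A) : Prop :=
  ∀ q, ∃ u v, IsReducedWord (u ++ v) ∧ M.Path M.q0 u q ∧ M.Path q v M.q0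

/-- Homomorphisms of automata. -/
def IsHom (M N : Autom A) (φ : M.Q → N.Q) : Prop :=
  φ M.q0 = N.q0 ∧ ∀ p a q, (p, a, q) ∈ M.E → (φ p, a, φ q) ∈ N.E

/-- Isomorphism of automata. -/
def Isomorphic (M N : Autom A) : Prop :=
  ∃ φ : M.Q ≃ N.Q, M.IsHom N φ ∧ N.IsHom M φ.symm

/-- `N` is (isomorphic to) the automaton obtained from `M` by identifying the two
states `p` and `q`. -/
def IsIdentification (M : Autom A) (p q : M.Q) (N : Autom A) : Prop :=
  ∃ φ : M.Q → N.Q,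
    Surjective φ ∧ φ M.q0 = N.q0 ∧
    (∀ x y, φ x = φ y ↔ x = y ∨ (x = p ∧ y = q) ∨ (x = q ∧ y = p)) ∧
    (∀ e : N.Q × Ltr A × N.Q, e ∈ N.E ↔ ∃ e' ∈ M.E, e = (φ e'.1, e'.2.1, φ e'.2.2))

/-- `N` is (isomorphic to) the automaton obtained from `M` by deleting the state `q`
and all transitions involving it. -/
def IsDeletion (M : Autom A) (q : M.Q) (N : Autom A) : Prop :=
  ∃ φ : N.Q → M.Q,
    Injective φ ∧ Set.range φ = {x | x ≠ q} ∧ φ N.q0 = M.q0 ∧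
    (∀ e : N.Q × Ltr A × N.Q, e ∈ N.E ↔ (φ e.1, e.2.1, φ e.2.2) ∈ M.E)

/-- Elementary reduction of type 1. -/
def Red1 (M N : Autom A) : Prop :=
  ∃ p q r a, p ≠ q ∧ (r, a, p) ∈ M.E ∧ (r, a, q) ∈ M.E ∧ M.IsIdentification p q N

/-- Elementary reduction of type 2. -/
def Red2 (M N : Autom A) : Prop :=
  ∃ (p q : M.Q) (a : Ltr A), q ≠ M.q0 ∧ (p, a, q) ∈ M.E ∧ (q, Ltr.inv a, p) ∈ M.E ∧
    (∀ e ∈ M.E, e.1 = q ∨ e.2.2 = q → e = (p, a, q) ∨ e = (q, Ltr.inv a, p)) ∧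
    M.IsDeletion q N

/-- `N` is (isomorphic to) the reduction `Mρ` of `M`: perform elementary reductions
of type 1 until the automaton is deterministic, then elementary reductions of type 2
until none is possible. -/
def ReductionOf (M N : Autom A) : Prop :=
  ∃ M₁, Relation.ReflTransGen Red1 M M₁ ∧ M₁.Deterministic ∧
    Relation.ReflTransGen Red2 M₁ N ∧ ∀ N', ¬ Red2 N N'

/-- `N` is (isomorphic to) the expansion of `M` by `(p, w, q)`: a new path labeled `w`
from `p` to `q` (together with its inverse path) whose intermediate states are new. -/
def IsExpansion (M : Autom A) (p : M.Q) (w : List (Ltr A)) (q : M.Q) (N : Autom A) : Prop :=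
  w ≠ [] ∧
  ∃ (φ : M.Q → N.Q) (c : Fin (w.length + 1) → N.Q),
    Injective φ ∧ φ M.q0 = N.q0 ∧ c 0 = φ p ∧ c (Fin.last w.length) = φ q ∧
    (∀ i : Fin (w.length + 1), 0 < (i : ℕ) → (i : ℕ) < w.length → c i ∉ Set.range φ) ∧
    (∀ i j : Fin (w.length + 1), 0 < (i : ℕ) → (i : ℕ) < w.length → c i = c j → i = j) ∧
    (∀ x : N.Q, (∃ y, φ y = x) ∨ ∃ i, c i = x) ∧
    (∀ e : N.Q × Ltr A × N.Q, e ∈ N.E ↔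
      ((∃ e' ∈ M.E, e = (φ e'.1, e'.2.1, φ e'.2.2)) ∨
        ∃ i : Fin w.length,
          e = (c i.castSucc, w.get i, c i.succ) ∨
          e = (c i.succ, Ltr.inv (w.get i), c i.castSucc)))

/-- `M →exp^{(p,w,q)} N` : `N` is (isomorphic to) the reduction of the expansion
of `M` by `(p,w,q)`. -/
def ExpStep (M : Autom A) (p : M.Q) (w : List (Ltr A)) (q : M.Q) (N : Autom A) : Prop :=
  ∃ N' N'', M.IsExpansion p w q N' ∧ ReductionOf N' N'' ∧ Isomorphic N'' N

/-- `M →re^{(p,w,q)} N` : a reduced expansion, i.e. an expansion-then-reduction in which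
`M` embeds in `N`. -/
def REStep (M : Autom A) (p : M.Q) (w : List (Ltr A)) (q : M.Q) (N : Autom A) : Prop :=
  M.ExpStep p w q N ∧ ∃ ψ : M.Q → N.Q, Injective ψ ∧ M.IsHom N ψ

/-- `M →e^{w} N` : an e-step, i.e. `M →exp^{(q0,w,q0)} N`. -/
def EStep (M : Autom A) (w : List (Ltr A)) (N : Autom A) : Prop :=
  M.ExpStep M.q0 w M.q0 N

/-- `M →i^{p=q} N` : an i-step; `N` is (isomorphic to) the reduction of the automaton
obtained from `M` by identifying the distinct states `p` and `q`. -/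
def IStep (M : Autom A) (p q : M.Q) (N : Autom A) : Prop :=
  p ≠ q ∧ ∃ N' N'', M.IsIdentification p q N' ∧ ReductionOf N' N'' ∧ Isomorphic N'' N

/-- i-step, allowing `p = q` (in which case nothing happens). -/
def IStep' (M : Autom A) (p q : M.Q) (N : Autom A) : Prop :=
  (p = q ∧ M.Isomorphic N) ∨ M.IStep p q N

/-- `M →i N` : some i-step applies. -/
def IStepAny (M N : Autom A) : Prop := ∃ p q, M.IStep p q N

/-- Some reduced expansion (by a nonempty reduced word) applies. -/
def REStepAny (M N : Autom A) : Prop :=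
  ∃ p w q, IsReducedWord w ∧ M.REStep p w q N

/-- `M` is (isomorphic to) `Γ_A(H)` : a reduced inverse automaton with `L(M)ρ = H`. -/
def Represents (M : Autom A) (H : Subgroup (FreeGroup A)) : Prop :=
  M.IsInv ∧ M.IsRed ∧ M.langRho = ↑H

/-- The `q0`-diameter of an automaton: the maximum over all states `q` of the minimal
length of a reduced word labeling a path from `q0` to `q`. -/
noncomputable def diam (M : Autom A) : ℕ :=
  ⨆ q : M.Q, sInf {n | ∃ u, IsReducedWord u ∧ u.length = n ∧ M.Path M.q0 u q}

end Autom

/-- `S` is a basis of the subgroup `H`: `S` generates `H` and freely so. -/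
def IsFreeBasis {G : Type} [Group G] (S : Set G) (H : Subgroup G) : Prop :=
  Subgroup.closure S = H ∧
    Injective (FreeGroup.lift (Subtype.val : S → G) : FreeGroup S →* G)

/-- `H ≤ff K` : `H` is a free factor of `K`. -/
def FreeFactor {G : Type} [Group G] (H K : Subgroup G) : Prop :=
  ∃ B C : Set G, IsFreeBasis B H ∧ IsFreeBasis C K ∧ B ⊆ C

/-- The rank of a subgroup: the cardinality of a basis (the common value of
the cardinalities of all bases, when `H` is a finite-rank free group). -/
noncomputable def rk {G : Type} [Group G] (H : Subgroup G) : ℕ :=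
  sInf {n | ∃ S : Set G, IsFreeBasis S H ∧ S.ncard = n}

/-- `L` is a graphical free factor of `K` with respect to `A`: `Γ_A(L)` embeds
in `Γ_A(K)`. -/
def GraphicalFF {A : Type} (L K : Subgroup (FreeGroup A)) : Prop :=
  L ≤ K ∧ ∃ ML MK : Autom A, ML.Represents L ∧ MK.Represents K ∧
    ∃ ψ : ML.Q → MK.Q, Injective ψ ∧ ML.IsHom MK ψ

/-- A step (i-step or reduced expansion) from `M` to `N` of cost `c`. -/
def StepCost {A : Type} (M N : Autom A) (c : ℕ) : Prop :=
  (c = 0 ∧ Autom.IStepAny M N) ∨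
  (∃ p w q, IsReducedWord w ∧ w.length = c ∧ M.REStep p w q N)

/-- The well-order `≺` on cost sequences. -/
def costLT (k l : List ℕ) : Prop :=
  k.length < l.length ∨
  (k.length = l.length ∧ k.sum < l.sum) ∨
  (k.length = l.length ∧ k.sum = l.sum ∧ List.Lex (· < ·) k l)

/-! ### Part 1: ranks and Hopfian property -/

section ranks

open MulOpposite

theorem fg_residual {α : Type} (g : FreeGroup α) (hg : g ≠ 1) :
    ∃ (S : Type) (_ : Finite S) (ρ : FreeGroup α →* Equiv.Perm S), ρ g ≠ 1 := by
  classical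
  let F : Finset (FreeGroup α) := (g.toWord.tails.map FreeGroup.mk).toFinset
  have memF : ∀ V, V <:+ g.toWord → FreeGroup.mk V ∈ F := by
    intro V hV
    simp only [F, List.mem_toFinset, List.mem_map, List.mem_tails]
    exact ⟨V, hV, rfl⟩
  have key : ∀ a : α, ∃ π : Equiv.Perm F, ∀ s t : F, (t : FreeGroup α) = FreeGroup.of a * s → π s = t := by
    intro a
    let e : {s : F // FreeGroup.of a * (s : FreeGroup α) ∈ F} ≃ {s : F // (FreeGroup.of a)⁻¹ * (s : FreeGroup α) ∈ F} :=
      { toFun := fun s => ⟨⟨_, s.2⟩, by simp⟩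
        invFun := fun s => ⟨⟨_, s.2⟩, by simp⟩
        left_inv := fun s => by ext; simp
        right_inv := fun s => by ext; simp }
    refine ⟨e.extendSubtype, fun s t h => ?_⟩
    rw [Equiv.extendSubtype_apply_of_mem e s (by rw [← h]; exact t.2)]
    ext
    exact h.symm
  choose π hπ using key
  refine ⟨F, inferInstance, FreeGroup.lift π, fun h => ?_⟩
  have main : ∀ V (hV : V <:+ g.toWord), FreeGroup.lift π (FreeGroup.mk V) ⟨1, memF [] (List.nil_suffix)⟩ = ⟨FreeGroup.mk V, memF V hV⟩ := by
    intro V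
    induction V with
    | nil => intro _; rfl
    | cons x V ih =>
      intro hV
      have hV' : V <:+ g.toWord := (List.suffix_cons x V).trans hV
      have : FreeGroup.mk (x :: V) = FreeGroup.mk [x] * FreeGroup.mk V := by
        rw [FreeGroup.mul_mk]; rfl
      simp only [this, map_mul, Equiv.Perm.mul_apply, ih hV']
      obtain ⟨a, b⟩ := x
      cases b with
      | true =>
        have h2 : FreeGroup.mk [(a, true)] = FreeGroup.of a := rfl
        simp only [h2, FreeGroup.lift_apply_of]
        exact hπ a _ _ rfl
      | false =>
        have h2 : FreeGroup.mk [(a, false)] = (FreeGroup.of a)⁻¹ := rfl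
        simp only [h2, map_inv, FreeGroup.lift_apply_of]
        rw [Equiv.Perm.inv_eq_iff_eq]
        symm
        apply hπ a
        simp
  have h1 := main g.toWord List.suffix_rfl
  have h2 := congrArg Subtype.val h1
  simp only [FreeGroup.mk_toWord, h] at h2
  exact hg h2.symm

theorem fg_hopf {α : Type} [Finite α] (f : FreeGroup α →* FreeGroup α) (hf : Surjective f) :
    Injective f := by
  rw [injective_iff_map_eq_one]
  intro g hg
  by_contra hne
  obtain ⟨S, _, ρ, hρ⟩ := fg_residual g hne
  have : Finite (FreeGroup α →* Equiv.Perm S) :=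
    Finite.of_equiv (α → Equiv.Perm S) FreeGroup.lift
  let c : (FreeGroup α →* Equiv.Perm S) → (FreeGroup α →* Equiv.Perm S) := fun χ => χ.comp f
  have hc : Injective c := by
    intro χ χ' h
    ext1 x
    obtain ⟨y, hy⟩ := hf (FreeGroup.of x)
    rw [← hy]
    exact DFunLike.congr_fun h y
  obtain ⟨χ, hχ⟩ := (Finite.injective_iff_surjective.1 hc) ρ
  apply hρ
  rw [← hχ]
  simp [c, hg]

theorem fg_card_le {α β : Type} [Finite α] (f : FreeGroup α →* FreeGroup β) (hf : Surjective f) :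
    Finite β ∧ Nat.card β ≤ Nat.card α := by
  let M := Multiplicative (ZMod 2)
  let c : (β → M) → (α → M) := fun χ => FreeGroup.lift.symm ((FreeGroup.lift χ).comp f)
  have hc : Injective c := by
    intro χ χ' h
    have h := FreeGroup.lift.symm.injective h
    apply FreeGroup.lift.injective
    ext1 x
    obtain ⟨y, hy⟩ := hf (FreeGroup.of x)
    rw [← hy]
    exact DFunLike.congr_fun h y
  have : Finite M := inferInstanceAs (Finite (ZMod 2))
  have : Nontrivial M := inferInstanceAs (Nontrivial (ZMod 2))
  have hcM : Nat.card M = 2 := by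
    change Nat.card (ZMod 2) = 2
    simp
  have h1 : Finite (β → M) := Finite.of_injective c hc
  have hβ : Finite β := by
    by_contra hinf
    rw [not_finite_iff_infinite] at hinf
    exact not_finite (β → M)
  refine ⟨hβ, ?_⟩
  have := Nat.card_le_card_of_injective c hc
  rw [Nat.card_fun, Nat.card_fun, hcM] at this
  exact (Nat.pow_le_pow_iff_right (by norm_num)).1 this

variable {G : Type} [Group G]

theorem basis_range {S : Set G} {H : Subgroup G} (h : IsFreeBasis S H) :
    (FreeGroup.lift (Subtype.val : S → G)).range = H := by
  rw [← h.1, FreeGroup.closure_eq_range]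

noncomputable def basisEquiv {S : Set G} {H : Subgroup G} (h : IsFreeBasis S H) :
    FreeGroup S ≃* H :=
  (MonoidHom.ofInjective h.2).trans (MulEquiv.subgroupCongr (basis_range h))

theorem basisEquiv_coe {S : Set G} {H : Subgroup G} (h : IsFreeBasis S H) (x : FreeGroup S) :
    ((basisEquiv h x : H) : G) = FreeGroup.lift (Subtype.val : S → G) x := rfl

/-- A bijective-onto-`H` free family gives a basis. -/
theorem basis_of_family {ι : Type} (f : ι → G) (H : Subgroup G)
    (h1 : Subgroup.closure (Set.range f) = H) (h2 : Injective (FreeGroup.lift f)) :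
    IsFreeBasis (Set.range f) H := by
  have hf : Injective f := by
    intro i j hij
    have : FreeGroup.lift f (FreeGroup.of i) = FreeGroup.lift f (FreeGroup.of j) := by simpa
    exact FreeGroup.of_injective (h2 this)
  refine ⟨h1, ?_⟩
  let e := FreeGroup.freeGroupCongr (Equiv.ofInjective f hf)
  have : FreeGroup.lift f = (FreeGroup.lift (Subtype.val : Set.range f → G)).comp e.toMonoidHom := by
    ext i
    simp [e]
  intro x y hxy
  obtain ⟨x, rfl⟩ := e.surjective x
  obtain ⟨y, rfl⟩ := e.surjective y
  rw [show x = y from h2 (by rw [this]; exact hxy)]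

theorem rk_eq {S : Set G} {H : Subgroup G} (h : IsFreeBasis S H) : rk H = S.ncard := by
  have : {n | ∃ S : Set G, IsFreeBasis S H ∧ S.ncard = n} = {S.ncard} := by
    ext n
    constructor
    · rintro ⟨S', h', rfl⟩
      have e : S' ≃ S := Equiv.ofFreeGroupEquiv ((basisEquiv h').trans (basisEquiv h).symm)
      exact Nat.card_congr e
    · rintro rfl
      exact ⟨S, h, rfl⟩
  rw [rk, this, csInf_singleton]

theorem exists_basis {A : Type} (H : Subgroup (FreeGroup A)) : ∃ S, IsFreeBasis S H := by
  let e := IsFreeGroup.mulEquiv H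
  refine ⟨Set.range (fun i => ((e (FreeGroup.of i) : H) : FreeGroup A)), ?_⟩
  have hl : FreeGroup.lift (fun i => ((e (FreeGroup.of i) : H) : FreeGroup A)) =
      H.subtype.comp e.toMonoidHom := by
    ext i
    simp
  apply basis_of_family
  · rw [← FreeGroup.range_lift_eq_closure, hl, MonoidHom.range_comp]
    have : e.toMonoidHom.range = ⊤ := MonoidHom.range_eq_top.2 e.surjective
    rw [this, ← MonoidHom.range_eq_map, Subgroup.range_subtype]
  · rw [hl]
    exact H.subtype_injective.comp e.injective

theorem rk_gen {A : Type} {H : Subgroup (FreeGroup A)} {ι : Type} [Finite ι] (f : ι → FreeGroup A)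
    (h : Subgroup.closure (Set.range f) = H) {S : Set (FreeGroup A)} (hS : IsFreeBasis S H) :
    S.Finite ∧ rk H ≤ Nat.card ι ∧ (Nat.card ι ≤ rk H → Injective (FreeGroup.lift f)) := by
  have hr : (FreeGroup.lift f).range = H := by rw [FreeGroup.range_lift_eq_closure, h]
  let φ : FreeGroup ι →* FreeGroup S :=
    (basisEquiv hS).symm.toMonoidHom.comp
      ((MulEquiv.subgroupCongr hr).toMonoidHom.comp (FreeGroup.lift f).rangeRestrict)
  have hφ : Surjective φ := (basisEquiv hS).symm.surjective.comp
    ((MulEquiv.subgroupCongr hr).surjective.comp (FreeGroup.lift f).rangeRestrict_surjective)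
  obtain ⟨h1, h2⟩ := fg_card_le φ hφ
  rw [rk_eq hS]
  refine ⟨h1, h2, fun h3 => ?_⟩
  obtain ⟨e⟩ : Nonempty (S ≃ ι) := Finite.card_eq.1 (le_antisymm h2 h3)
  let ee := FreeGroup.freeGroupCongr e
  have hi : Injective (ee.toMonoidHom.comp φ) := fg_hopf _ (ee.surjective.comp hφ)
  intro x y hxy
  apply hi
  simp only [φ, MonoidHom.comp_apply]
  congr 3
  exact Subtype.ext hxy

theorem fg_basis_finite {A : Type} {H : Subgroup (FreeGroup A)} (hH : H.FG) {S : Set (FreeGroup A)}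
    (hS : IsFreeBasis S H) : S.Finite := by
  obtain ⟨T, hT⟩ := hH
  exact (rk_gen (fun x : T => (x : FreeGroup A)) (by simpa using hT) hS).1

end ranks

/-! ### Part 2: cores of subgroups -/

section cores

variable {A : Type}

/-- The group element of a letter. -/
def ltr (x : Ltr A) : FreeGroup A := FreeGroup.mk [x]

theorem mk_cons (x : Ltr A) (W : List (Ltr A)) :
    FreeGroup.mk (x :: W) = ltr x * FreeGroup.mk W := by
  rw [ltr, FreeGroup.mul_mk]; rfl

theorem mk_append (V W : List (Ltr A)) :
    FreeGroup.mk (V ++ W) = FreeGroup.mk V * FreeGroup.mk W := by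
  rw [FreeGroup.mul_mk]

theorem mk_nil : FreeGroup.mk ([] : List (Ltr A)) = 1 := rfl

theorem ltr_inv (x : Ltr A) : ltr (Ltr.inv x) = (ltr x)⁻¹ := by
  simp [ltr, Ltr.inv, FreeGroup.inv_mk, FreeGroup.invRev]

theorem Ltr.inv_inv (x : Ltr A) : Ltr.inv (Ltr.inv x) = x := by
  simp [Ltr.inv]

theorem invRev_single (x : Ltr A) : FreeGroup.invRev [x] = [Ltr.inv x] := rfl

theorem prefix_app {α : Type} {V W₁ W₂ : List α} (h : V <+: W₁ ++ W₂) :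
    V <+: W₁ ∨ ∃ t, V = W₁ ++ t ∧ t <+: W₂ := by
  obtain ⟨T, hT⟩ := h
  rcases List.append_eq_append_iff.1 hT with ⟨a, ha1, ha2⟩ | ⟨a, ha1, ha2⟩
  · exact Or.inl ⟨a, ha1.symm⟩
  · exact Or.inr ⟨a, ha1, ⟨T, ha2.symm⟩⟩

open Classical in
/-- reduced word of an element -/
noncomputable def nw (g : FreeGroup A) : List (Ltr A) := g.toWord

theorem mk_nw (g : FreeGroup A) : FreeGroup.mk (nw g) = g := by
  classical
  exact FreeGroup.mk_toWord

theorem nw_red (g : FreeGroup A) : FreeGroup.IsReduced (nw g) := by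
  classical
  exact FreeGroup.isReduced_toWord

theorem nw_mk {W : List (Ltr A)} (h : FreeGroup.IsReduced W) : nw (FreeGroup.mk W) = W := by
  classical
  rw [nw, FreeGroup.toWord_mk]
  convert h.reduce_eq

theorem red_nw (W : List (Ltr A)) : FreeGroup.Red W (nw (FreeGroup.mk W)) := by
  classical
  rw [nw, FreeGroup.toWord_mk]
  exact FreeGroup.reduce.red

/-- All prefixes of `W` lie in `D`. -/
def PreIn (D : Set (FreeGroup A)) (W : List (Ltr A)) : Prop :=
  ∀ V, V <+: W → FreeGroup.mk V ∈ D

theorem preIn_step {D : Set (FreeGroup A)} {W W' : List (Ltr A)} (h : FreeGroup.Red.Step W W')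
    (hW : PreIn D W) : PreIn D W' := by
  cases h with
  | @not W₁ W₂ a b =>
    intro V hV
    rcases prefix_app hV with hV | ⟨t, rfl, ht⟩
    · exact hW V (hV.trans (List.prefix_append _ _))
    · have := hW (W₁ ++ (a, b) :: (a, !b) :: t) (by
        rw [List.prefix_append_right_inj, List.cons_prefix_cons, List.cons_prefix_cons]
        exact ⟨rfl, rfl, ht⟩)
      have h2 : FreeGroup.mk (W₁ ++ (a, b) :: (a, !b) :: t) = FreeGroup.mk (W₁ ++ t) :=
        Quot.sound FreeGroup.Red.Step.not
      rwa [h2] at this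

theorem preIn_nw {D : Set (FreeGroup A)} {W : List (Ltr A)} (hW : PreIn D W) :
    PreIn D (nw (FreeGroup.mk W)) := by
  have : ∀ W', FreeGroup.Red W W' → PreIn D W' := by
    intro W' h
    induction h with
    | refl => exact hW
    | tail _ h ih => exact preIn_step h ih
  exact this _ (red_nw W)

theorem preIn_append {D : Set (FreeGroup A)} {W V : List (Ltr A)} (hW : PreIn D W)
    (hV : ∀ V', V' <+: V → FreeGroup.mk W * FreeGroup.mk V' ∈ D) : PreIn D (W ++ V) := by
  intro U hU
  rcases prefix_app hU with hU | ⟨t, rfl, ht⟩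
  · exact hW U hU
  · rw [mk_append]; exact hV t ht

/-- Closed sets of vertices. -/
structure ClosedIn (L : Subgroup (FreeGroup A)) (D : Set (FreeGroup A)) : Prop where
  one : (1 : FreeGroup A) ∈ D
  inv : ∀ h ∈ L, ∀ g ∈ D, h * g ∈ D
  pre : ∀ g ∈ D, PreIn D (nw g)

theorem ClosedIn.inv_iff {L : Subgroup (FreeGroup A)} {D : Set (FreeGroup A)} (h : ClosedIn L D)
    {x g : FreeGroup A} (hx : x ∈ L) : x * g ∈ D ↔ g ∈ D :=
  ⟨fun h' => by simpa using h.inv x⁻¹ (L.inv_mem hx) _ h', h.inv x hx g⟩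

theorem ClosedIn.sub {L : Subgroup (FreeGroup A)} {D : Set (FreeGroup A)} (h : ClosedIn L D)
    {x : FreeGroup A} (hx : x ∈ L) : x ∈ D := by
  simpa using h.inv x hx 1 h.one

/-- The core of `L` (as a set of elements labelling paths in the core graph). -/
def core (L : Subgroup (FreeGroup A)) : Set (FreeGroup A) :=
  {g | ∃ h ∈ L, ∃ h' ∈ L, ∃ V, V <+: nw h' ∧ g = h * FreeGroup.mk V}

theorem core_closed (L : Subgroup (FreeGroup A)) : ClosedIn L (core L) where
  one := ⟨1, L.one_mem, 1, L.one_mem, [], List.nil_prefix, by simp [mk_nil]⟩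
  inv := by
    rintro x hx _ ⟨h, hh, h', hh', V, hV, rfl⟩
    exact ⟨x * h, L.mul_mem hx hh, h', hh', V, hV, by rw [mul_assoc]⟩
  pre := by
    rintro _ ⟨h, hh, h', hh', V, hV, rfl⟩
    have : PreIn (core L) (nw h ++ V) := by
      apply preIn_append
      · intro U hU
        exact ⟨1, L.one_mem, h, hh, U, hU, by simp⟩
      · intro U hU
        exact ⟨h, hh, h', hh', U, hU.trans hV, by rw [mk_nw]⟩
    have := preIn_nw this
    rwa [mk_append, mk_nw] at this

theorem core_subset {L : Subgroup (FreeGroup A)} {D : Set (FreeGroup A)}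
    (h1 : ∀ h ∈ L, ∀ g ∈ D, h * g ∈ D) (h2 : ∀ h ∈ L, PreIn D (nw h)) : core L ⊆ D := by
  rintro _ ⟨h, hh, h', hh', V, hV, rfl⟩
  exact h1 h hh _ (h2 h' hh' V hV)

theorem core_mono {L K : Subgroup (FreeGroup A)} (h : L ≤ K) : core L ⊆ core K := by
  rintro _ ⟨x, hh, h', hh', V, hV, rfl⟩
  exact ⟨x, h hh, h', h hh', V, hV, rfl⟩

theorem preIn_gen {L : Subgroup (FreeGroup A)} {D : Set (FreeGroup A)} (hone : 1 ∈ D)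
    (h1 : ∀ h ∈ L, ∀ g ∈ D, h * g ∈ D) (S : Set (FreeGroup A)) (hS : Subgroup.closure S = L)
    (hD : ∀ s ∈ S, ∃ W, FreeGroup.mk W = s ∧ PreIn D W) : ∀ h ∈ L, PreIn D (nw h) := by
  intro h hh
  rw [← hS] at hh
  induction hh using Subgroup.closure_induction with
  | mem x hx =>
    obtain ⟨W, rfl, hW⟩ := hD x hx
    exact preIn_nw hW
  | one =>
    intro V hV
    have : nw (1 : FreeGroup A) = [] := nw_mk FreeGroup.IsReduced.nil
    rw [this, List.prefix_nil] at hV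
    subst hV
    exact hone
  | mul x y hx hy ihx ihy =>
    have : PreIn D (nw x ++ nw y) := by
      apply preIn_append ihx
      intro V hV
      rw [mk_nw]
      exact h1 x (hS ▸ hx) _ (ihy V hV)
    have := preIn_nw this
    rwa [mk_append, mk_nw, mk_nw] at this
  | inv x hx ih =>
    have : PreIn D (FreeGroup.invRev (nw x)) := by
      intro V hV
      obtain ⟨T, hT⟩ := hV
      have h3 : nw x = FreeGroup.invRev T ++ FreeGroup.invRev V := by
        rw [← FreeGroup.invRev_append, hT, FreeGroup.invRev_invRev]
      have h4 := ih (FreeGroup.invRev T) (by rw [h3]; exact List.prefix_append _ _)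
      have h5 : x = FreeGroup.mk (FreeGroup.invRev T) * (FreeGroup.mk V)⁻¹ := by
        rw [FreeGroup.inv_mk, ← mk_append, ← h3, mk_nw]
      have h6 : FreeGroup.mk V = x⁻¹ * FreeGroup.mk (FreeGroup.invRev T) := by
        rw [h5]; group
      rw [h6]
      exact h1 _ (L.inv_mem (hS ▸ hx)) _ h4
    have := preIn_nw this
    rwa [← FreeGroup.inv_mk, mk_nw] at this

/-- `L ⊔ ⟨t⟩` -/
def adj (L : Subgroup (FreeGroup A)) (t : FreeGroup A) : Subgroup (FreeGroup A) :=
  L ⊔ Subgroup.closure {t}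

theorem le_adj (L : Subgroup (FreeGroup A)) (t : FreeGroup A) : L ≤ adj L t := le_sup_left

theorem mem_adj (L : Subgroup (FreeGroup A)) (t : FreeGroup A) : t ∈ adj L t :=
  (le_sup_right : _ ≤ adj L t) (Subgroup.subset_closure rfl)

theorem adj_le {L K : Subgroup (FreeGroup A)} {t : FreeGroup A} (h : L ≤ K) (ht : t ∈ K) :
    adj L t ≤ K := by
  apply sup_le h
  rw [Subgroup.closure_le]
  simpa using ht

theorem adj_closure (L : Subgroup (FreeGroup A)) (t : FreeGroup A) :
    Subgroup.closure ((L : Set (FreeGroup A)) ∪ {t}) = adj L t := by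
  rw [Subgroup.closure_union, Subgroup.closure_eq, adj]

theorem core_adj {L : Subgroup (FreeGroup A)} {u v : FreeGroup A} (hu : u ∈ core L)
    (hv : v ∈ core L) (w : List (Ltr A)) {g : FreeGroup A}
    (hg : g ∈ core (adj L (u * FreeGroup.mk w * v⁻¹))) :
    ∃ h ∈ adj L (u * FreeGroup.mk w * v⁻¹), (∃ c ∈ core L, g = h * c) ∨
      (∃ w1 w2, w = w1 ++ w2 ∧ g = h * (u * FreeGroup.mk w1)) := by
  set t := u * FreeGroup.mk w * v⁻¹ with ht
  let D : Set (FreeGroup A) := {g | ∃ h ∈ adj L t, (∃ c ∈ core L, g = h * c) ∨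
      (∃ w1 w2, w = w1 ++ w2 ∧ g = h * (u * FreeGroup.mk w1))}
  have hcD : core L ⊆ D := fun c hc => ⟨1, Subgroup.one_mem _, Or.inl ⟨c, hc, by simp⟩⟩
  have hinv : ∀ h ∈ adj L t, ∀ g ∈ D, h * g ∈ D := by
    rintro x hx _ ⟨h, hh, ⟨c, hc, rfl⟩ | ⟨w1, w2, hw, rfl⟩⟩
    · exact ⟨x * h, Subgroup.mul_mem _ hx hh, Or.inl ⟨c, hc, by group⟩⟩
    · exact ⟨x * h, Subgroup.mul_mem _ hx hh, Or.inr ⟨w1, w2, hw, by group⟩⟩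
  have := core_subset (L := adj L t) (D := D) hinv
  apply this ?_ hg
  apply preIn_gen (hcD (core_closed L).one) hinv _ (adj_closure L t)
  rintro s (hs | hs)
  · exact ⟨nw s, mk_nw s, fun V hV => hcD ((core_closed L).pre s ((core_closed L).sub hs) V hV)⟩
  · rw [Set.mem_singleton_iff] at hs
    refine ⟨nw u ++ w ++ FreeGroup.invRev (nw v), ?_, ?_⟩
    · rw [hs, mk_append, mk_append, ← FreeGroup.inv_mk, mk_nw, mk_nw]
    · apply preIn_append
      · apply preIn_append
        · exact fun V hV => hcD ((core_closed L).pre u hu V hV)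
        · rintro w1 ⟨w2, hw⟩
          exact ⟨1, Subgroup.one_mem _, Or.inr ⟨w1, w2, hw.symm, by simp [mk_nw]⟩⟩
      · rintro V ⟨T, hT⟩
        have h3 : nw v = FreeGroup.invRev T ++ FreeGroup.invRev V := by
          rw [← FreeGroup.invRev_append, hT, FreeGroup.invRev_invRev]
        have h4 := (core_closed L).pre v hv (FreeGroup.invRev T)
          (by rw [h3]; exact List.prefix_append _ _)
        have h5 : v = FreeGroup.mk (FreeGroup.invRev T) * (FreeGroup.mk V)⁻¹ := by
          rw [FreeGroup.inv_mk, ← mk_append, ← h3, mk_nw]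
        refine ⟨t, mem_adj L t, Or.inl ⟨_, h4, ?_⟩⟩
        have h6 : FreeGroup.mk V = v⁻¹ * FreeGroup.mk (FreeGroup.invRev T) := by
          rw [h5]; group
        rw [mk_append, mk_nw, ht, h6]
        group

/-- `Γ(L)` embeds in `Γ(K)`. -/
def Emb (L K : Subgroup (FreeGroup A)) : Prop :=
  L ≤ K ∧ ∀ x ∈ core L, ∀ y ∈ core L, x * y⁻¹ ∈ K → x * y⁻¹ ∈ L

theorem Emb.trans {L K N : Subgroup (FreeGroup A)} (h1 : Emb L K) (h2 : Emb K N) : Emb L N :=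
  ⟨h1.1.trans h2.1, fun x hx y hy h =>
    h1.2 x hx y hy (h2.2 x (core_mono h1.1 hx) y (core_mono h1.1 hy) h)⟩

theorem Emb.refl (L : Subgroup (FreeGroup A)) : Emb L L := ⟨le_rfl, fun _ _ _ _ h => h⟩

/-! Exits -/

/-- The word `z` starting at `d` leaves `D` at once. -/
def Exits (D : Set (FreeGroup A)) (d : FreeGroup A) (z : List (Ltr A)) : Prop :=
  ∀ x z', z = x :: z' → d * ltr x ∉ D

theorem exits_nw {L : Subgroup (FreeGroup A)} {D : Set (FreeGroup A)} (hD : ClosedIn L D)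
    {d : FreeGroup A} (hd : d ∈ D) {z : List (Ltr A)} (hz : FreeGroup.IsReduced z)
    (he : Exits D d z) : nw (d * FreeGroup.mk z) = nw d ++ z := by
  have : FreeGroup.IsReduced (nw d ++ z) := by
    unfold FreeGroup.IsReduced at *
    rw [List.isChain_append]
    refine ⟨nw_red d, hz, ?_⟩
    intro x hx y hy hxy
    by_contra hne
    obtain ⟨z', rfl⟩ : ∃ z', z = y :: z' := by
      cases z with
      | nil => simp at hy
      | cons a z' => exact ⟨z', by simp at hy; rw [hy]⟩
    apply he y z' rfl
    obtain ⟨V, hV⟩ : ∃ V, nw d = V ++ [x] := by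
      rw [Option.mem_def, List.getLast?_eq_some_iff] at hx
      exact hx
    have hxy' : y = Ltr.inv x := by
      obtain ⟨x1, x2⟩ := x
      obtain ⟨y1, y2⟩ := y
      simp only [Ltr.inv] at *
      subst hxy
      cases x2 <;> cases y2 <;> simp_all
    have : d * ltr y = FreeGroup.mk V := by
      rw [hxy', ltr_inv, ← mk_nw d, hV, mk_append]
      exact mul_inv_cancel_right _ _
    rw [this]
    exact hD.pre d hd V (by rw [hV]; exact List.prefix_append _ _)
  rw [← nw_mk this, mk_append, mk_nw]

theorem exits_inj {L : Subgroup (FreeGroup A)} {D : Set (FreeGroup A)} (hD : ClosedIn L D)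
    {d d' : FreeGroup A} (hd : d ∈ D) (hd' : d' ∈ D) {z z' : List (Ltr A)}
    (hz : FreeGroup.IsReduced z) (hz' : FreeGroup.IsReduced z')
    (he : Exits D d z) (he' : Exits D d' z') (h : d * FreeGroup.mk z = d' * FreeGroup.mk z') :
    d = d' ∧ z = z' := by
  have h1 := congrArg nw h
  rw [exits_nw hD hd hz he, exits_nw hD hd' hz' he'] at h1
  have aux : ∀ {d d' : FreeGroup A} {z z' : List (Ltr A)}, d' ∈ D → Exits D d z →
      ∀ a, nw d' = nw d ++ a → z = a ++ z' → d = d' ∧ z = z' := by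
    intro d d' z z' hd' he a ha1 ha2
    cases a with
    | nil =>
      simp only [List.append_nil, List.nil_append] at ha1 ha2
      exact ⟨by rw [← mk_nw d, ← mk_nw d', ha1], ha2⟩
    | cons x a =>
      exfalso
      apply he x (a ++ z') (by simpa using ha2)
      have := hD.pre d' hd' (nw d ++ [x]) ⟨a, by rw [ha1]; simp⟩
      rwa [mk_append, mk_nw] at this
  rcases List.append_eq_append_iff.1 h1 with ⟨a, ha1, ha2⟩ | ⟨a, ha1, ha2⟩
  · exact aux hd' he a ha1 ha2
  · obtain ⟨h2, h3⟩ := aux hd he' a ha1 ha2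
    exact ⟨h2.symm, h3.symm⟩

theorem exits_mul {L : Subgroup (FreeGroup A)} {D : Set (FreeGroup A)} (hD : ClosedIn L D)
    {d : FreeGroup A} {z : List (Ltr A)} (he : Exits D d z) {h : FreeGroup A} (hh : h ∈ L) :
    Exits D (h * d) z := by
  intro x z' hz
  rw [mul_assoc, hD.inv_iff hh]
  exact he x z' hz

/-- depth is invariant -/
theorem exits_inj' {L : Subgroup (FreeGroup A)} {D : Set (FreeGroup A)} (hD : ClosedIn L D)
    {d d' : FreeGroup A} (hd : d ∈ D) (hd' : d' ∈ D) {z z' : List (Ltr A)}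
    (hz : FreeGroup.IsReduced z) (hz' : FreeGroup.IsReduced z')
    (he : Exits D d z) (he' : Exits D d' z')
    (h : (d * FreeGroup.mk z) * (d' * FreeGroup.mk z')⁻¹ ∈ L) : z = z' := by
  have := exits_inj hD hd (hD.inv _ h _ hd') hz hz' he (exits_mul hD he' h) (by group)
  exact this.2

theorem exits_not_mem {L : Subgroup (FreeGroup A)} {D : Set (FreeGroup A)} (hD : ClosedIn L D)
    {d : FreeGroup A} (hd : d ∈ D) {z : List (Ltr A)} (hz : FreeGroup.IsReduced z)
    (he : Exits D d z) (hne : z ≠ []) : d * FreeGroup.mk z ∉ D := by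
  intro h
  have := exits_inj hD hd h hz FreeGroup.IsReduced.nil he (by intro x z' h; simp at h)
    (by simp [mk_nil])
  exact hne this.2

theorem Exits.prefix {D : Set (FreeGroup A)} {d : FreeGroup A} {z z' : List (Ltr A)}
    (he : Exits D d (z ++ z')) : Exits D d z := by
  intro x t ht
  exact he x (t ++ z') (by rw [ht]; rfl)

end cores

/-! ### Part 3: right actions and the attaching lemma -/

section attach

variable {A : Type}

/-- right action attached to a family of permutations -/
noncomputable def ra {X : Type} (P : A → Equiv.Perm X) (g : FreeGroup A) (y : X) : X :=
  (FreeGroup.lift (fun a => (P a)⁻¹) g⁻¹ : Equiv.Perm X) y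

theorem ra_one {X : Type} (P : A → Equiv.Perm X) (y : X) : ra P 1 y = y := by
  simp [ra]

theorem ra_mul {X : Type} (P : A → Equiv.Perm X) (g h : FreeGroup A) (y : X) :
    ra P (g * h) y = ra P h (ra P g y) := by
  rw [ra, mul_inv_rev, map_mul]; rfl

theorem ra_ltr {X : Type} (P : A → Equiv.Perm X) (x : Ltr A) (y : X) :
    ra P (ltr x) y = if x.2 then P x.1 y else (P x.1).symm y := by
  obtain ⟨a, b⟩ := x
  have h : ltr (a, true) = FreeGroup.of a := rfl
  have h' : ltr (a, false) = (FreeGroup.of a)⁻¹ := rfl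
  cases b
  · rw [h', ra, inv_inv, FreeGroup.lift_apply_of]; rfl
  · rw [h, ra, map_inv, FreeGroup.lift_apply_of, inv_inv]; rfl

/-- right cosets -/
abbrev Cos (L : Subgroup (FreeGroup A)) : Type := Quotient (QuotientGroup.rightRel L)

/-- class of an element -/
def cls (L : Subgroup (FreeGroup A)) (g : FreeGroup A) : Cos L := Quotient.mk _ g

theorem cls_eq {L : Subgroup (FreeGroup A)} {g g' : FreeGroup A} :
    cls L g = cls L g' ↔ g * g'⁻¹ ∈ L := by
  rw [cls, cls, Quotient.eq, QuotientGroup.rightRel_apply, ← Subgroup.inv_mem_iff]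
  simp

theorem cls_surj {L : Subgroup (FreeGroup A)} (x : Cos L) : ∃ g, cls L g = x :=
  Quotient.exists_rep x

theorem cls_mul_left {L : Subgroup (FreeGroup A)} {h : FreeGroup A} (hh : h ∈ L)
    (g : FreeGroup A) : cls L (h * g) = cls L g := by
  rw [cls_eq]; simpa using hh

theorem cls_mul_right {L : Subgroup (FreeGroup A)} {g g' : FreeGroup A} (h : cls L g = cls L g')
    (k : FreeGroup A) : cls L (g * k) = cls L (g' * k) := by
  rw [cls_eq] at *; simpa [mul_assoc] using h

/-- right multiplication on cosets -/
def rmulF (L : Subgroup (FreeGroup A)) (k : FreeGroup A) (x : Cos L) : Cos L :=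
  Quotient.lift (fun g => cls L (g * k)) (fun _ _ h => cls_mul_right (Quotient.sound h) k) x

theorem rmulF_cls (L : Subgroup (FreeGroup A)) (k g : FreeGroup A) :
    rmulF L k (cls L g) = cls L (g * k) := rfl

/-- right multiplication as a permutation -/
def rmul (L : Subgroup (FreeGroup A)) (k : FreeGroup A) : Equiv.Perm (Cos L) where
  toFun := rmulF L k
  invFun := rmulF L k⁻¹
  left_inv := by
    intro x; obtain ⟨g, rfl⟩ := cls_surj x; simp [rmulF_cls]
  right_inv := by
    intro x; obtain ⟨g, rfl⟩ := cls_surj x; simp [rmulF_cls]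

theorem rmul_cls (L : Subgroup (FreeGroup A)) (k g : FreeGroup A) :
    rmul L k (cls L g) = cls L (g * k) := rfl

theorem rmul_symm_cls (L : Subgroup (FreeGroup A)) (k g : FreeGroup A) :
    (rmul L k).symm (cls L g) = cls L (g * k⁻¹) := rfl

open Classical in
/-- modified permutations -/
noncomputable def modP (L : Subgroup (FreeGroup A)) (b : Ltr A) (z q : Cos L) (a : A) :
    Equiv.Perm (Cos L) :=
  if a = b.1 then
    (if b.2 then (rmul L (FreeGroup.of a)).trans (Equiv.swap z q)
      else (Equiv.swap z q).trans (rmul L (FreeGroup.of a)))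
  else rmul L (FreeGroup.of a)

theorem modP_b (L : Subgroup (FreeGroup A)) (b : Ltr A) (z q : Cos L) (g : FreeGroup A)
    (h : cls L (g * ltr b) = z) : ra (modP L b z q) (ltr b) (cls L g) = q := by
  classical
  obtain ⟨a, b2⟩ := b
  rw [ra_ltr]
  have h1 : ltr (a, true) = FreeGroup.of a := rfl
  have h2 : ltr (a, false) = (FreeGroup.of a)⁻¹ := rfl
  cases b2
  · rw [h2] at h
    simp [modP, rmul_symm_cls, h]
  · rw [h1] at h
    simp [modP, rmul_cls, h]

theorem modP_ne (L : Subgroup (FreeGroup A)) (b : Ltr A) (z q : Cos L) (g : FreeGroup A)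
    (x : Ltr A) (h1 : x = b → cls L (g * ltr x) ≠ z ∧ cls L (g * ltr x) ≠ q)
    (h2 : x = Ltr.inv b → cls L g ≠ z ∧ cls L g ≠ q) :
    ra (modP L b z q) (ltr x) (cls L g) = cls L (g * ltr x) := by
  classical
  obtain ⟨a, b2⟩ := b
  obtain ⟨c, x2⟩ := x
  rw [ra_ltr]
  have e1 : ltr (c, true) = FreeGroup.of c := rfl
  have e2 : ltr (c, false) = (FreeGroup.of c)⁻¹ := rfl
  by_cases hc : c = a
  · subst hc
    cases b2 <;> cases x2 <;> simp [Ltr.inv, e1, e2] at h1 h2 <;>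
      simp [modP, rmul_symm_cls, rmul_cls, e1, e2]
    · rw [Equiv.swap_apply_of_ne_of_ne h1.1 h1.2]
    · rw [Equiv.swap_apply_of_ne_of_ne h2.1 h2.2, rmul_cls]
    · rw [Equiv.swap_apply_of_ne_of_ne h2.1 h2.2, rmul_symm_cls]
    · rw [Equiv.swap_apply_of_ne_of_ne h1.1 h1.2]
  · cases x2 <;> simp [modP, hc, rmul_symm_cls, rmul_cls, e1, e2]

theorem ra_path {L : Subgroup (FreeGroup A)} (P : A → Equiv.Perm (Cos L)) (g : FreeGroup A)
    (W : List (Ltr A)) (h : ∀ V x, V ++ [x] <+: W →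
      ra P (ltr x) (cls L (g * FreeGroup.mk V)) = cls L (g * FreeGroup.mk V * ltr x)) :
    ra P (FreeGroup.mk W) (cls L g) = cls L (g * FreeGroup.mk W) := by
  induction W using List.reverseRecOn with
  | nil => rw [mk_nil, ra_one, mul_one]
  | append_singleton W x ih =>
    rw [mk_append, ra_mul, ih (fun V y hV => h V y (hV.trans (List.prefix_append _ _)))]
    have := h W x (List.prefix_refl _)
    rw [← mul_assoc]
    exact this

theorem emb_attach_main {L : Subgroup (FreeGroup A)} {D : Set (FreeGroup A)} (hD : ClosedIn L D)
    {u v : FreeGroup A} (hu : u ∈ D) (hv : v ∈ D) (w : List (Ltr A)) (b : Ltr A)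
    (hw : FreeGroup.IsReduced (w ++ [b])) (heu : Exits D u (w ++ [b]))
    (hev : v * ltr (Ltr.inv b) ∉ D)
    (hnl : cls L u = cls L v → ∀ w0, w ≠ Ltr.inv b :: w0)
    {x y : FreeGroup A} (hx : x ∈ D) (hy : y ∈ D)
    (hxy : x * y⁻¹ ∈ adj L (u * FreeGroup.mk (w ++ [b]) * v⁻¹)) : x * y⁻¹ ∈ L := by
  set z := cls L (u * FreeGroup.mk (w ++ [b])) with hz
  set q := cls L v with hq
  set P := modP L b z q with hP
  have hDc : ∀ {g g' : FreeGroup A}, cls L g = cls L g' → (g ∈ D ↔ g' ∈ D) := by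
    intro g g' h
    rw [cls_eq] at h
    have := hD.inv_iff (g := g') h
    simpa using this
  have hzD : u * FreeGroup.mk (w ++ [b]) ∉ D := exits_not_mem hD hu hw heu (by simp)
  have hvb : ∀ g, cls L (g * ltr b) = q → g ∉ D := by
    intro g h hg
    apply hev
    have := cls_mul_right h (ltr (Ltr.inv b))
    rw [ltr_inv] at this ⊢
    rw [mul_inv_cancel_right] at this
    exact (hDc this).1 hg
  have hvb' : ∀ g, cls L g = q → g * ltr (Ltr.inv b) ∉ D := by
    intro g h hg
    exact hev ((hDc (cls_mul_right h _)).1 hg)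
  have hDD : ∀ g ∈ D, ∀ x, g * ltr x ∈ D → ra P (ltr x) (cls L g) = cls L (g * ltr x) := by
    intro g hg x hgx
    apply modP_ne
    · rintro rfl
      exact ⟨fun h => hzD ((hDc h).1 hgx), fun h => hvb g h hg⟩
    · rintro rfl
      exact ⟨fun h => hzD ((hDc h).1 hg), fun h => hvb' g h hgx⟩
  have hDp : ∀ g ∈ D, ra P g (cls L 1) = cls L g := by
    intro g hg
    have := ra_path P 1 (nw g) (by
      intro V x hV
      rw [one_mul]
      apply hDD
      · exact hD.pre g hg V ((List.prefix_append _ _).trans hV)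
      · have := hD.pre g hg _ hV
        rwa [mk_append] at this)
    rwa [mk_nw, one_mul] at this
  have hlen : ∀ V, V <+: w → ∀ g, cls L g = cls L (u * FreeGroup.mk V) → cls L g ≠ z := by
    intro V hV g hg h
    rw [hg, hz, cls_eq] at h
    obtain ⟨T, hT⟩ := hV
    have hpre : w ++ [b] = V ++ (T ++ [b]) := by rw [← hT]; simp
    have := exits_inj' hD hu hu (z := V) (z' := w ++ [b]) (by
      rw [hpre] at hw
      unfold FreeGroup.IsReduced at *
      exact (List.isChain_append.1 hw).1) hw (by
      rw [hpre] at heu; exact heu.prefix) heu h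
    have := congrArg List.length this
    rw [← hT] at this
    simp at this
  have hq' : ∀ V, V <+: w → V ≠ [] → cls L (u * FreeGroup.mk V) ≠ q := by
    intro V hV hne h
    obtain ⟨T, hT⟩ := hV
    have hpre : w ++ [b] = V ++ (T ++ [b]) := by rw [← hT]; simp
    have := exits_not_mem hD hu (z := V) (by
      rw [hpre] at hw
      unfold FreeGroup.IsReduced at *
      exact (List.isChain_append.1 hw).1) (by
      rw [hpre] at heu; exact heu.prefix) hne
    exact this ((hDc h).2 hv)
  have hpw : ra P (FreeGroup.mk w) (cls L u) = cls L (u * FreeGroup.mk w) := by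
    apply ra_path
    intro V x hV
    apply modP_ne
    · intro _
      have e : u * FreeGroup.mk V * ltr x = u * FreeGroup.mk (V ++ [x]) := by
        rw [mk_append, mul_assoc]; rfl
      rw [e]
      exact ⟨hlen _ hV _ rfl, hq' _ hV (by simp)⟩
    · rintro rfl
      refine ⟨hlen _ ((List.prefix_append _ _).trans hV) _ rfl, ?_⟩
      by_cases hVn : V = []
      · subst hVn
        rw [mk_nil, mul_one]
        intro h
        obtain ⟨T, hT⟩ := hV
        exact hnl h T (by rw [← hT]; simp)
      · exact hq' _ ((List.prefix_append _ _).trans hV) hVn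
  have hpt : ra P (FreeGroup.mk (w ++ [b])) (cls L u) = cls L v := by
    rw [mk_append, ra_mul, hpw]
    apply modP_b
    rw [hz, mk_append, mul_assoc]; rfl
  have hstab : ∀ g ∈ adj L (u * FreeGroup.mk (w ++ [b]) * v⁻¹), ra P g (cls L 1) = cls L 1 := by
    let S : Subgroup (FreeGroup A) :=
      { carrier := {g | ra P g (cls L 1) = cls L 1}
        one_mem' := ra_one _ _
        mul_mem' := by
          intro g h hg hh
          simp only [Set.mem_ofPred_eq] at *
          rw [ra_mul, hg, hh]
        inv_mem' := by
          intro g hg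
          simp only [Set.mem_ofPred_eq] at *
          conv_lhs => rw [← hg]
          rw [← ra_mul, mul_inv_cancel, ra_one] }
    have : adj L (u * FreeGroup.mk (w ++ [b]) * v⁻¹) ≤ S := by
      apply adj_le
      · intro g hg
        change ra P g (cls L 1) = cls L 1
        rw [hDp g (hD.sub hg), cls_eq]
        simpa using hg
      · change ra P _ (cls L 1) = cls L 1
        rw [ra_mul, ra_mul, hDp u hu, hpt, ← hDp v hv, ← ra_mul, mul_inv_cancel, ra_one]
    exact fun g hg => this hg
  have h1 := hstab _ hxy
  have h2 : ra P y (ra P (x * y⁻¹) (cls L 1)) = ra P x (cls L 1) := by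
    rw [← ra_mul]; simp
  rw [h1, hDp x hx, hDp y hy] at h2
  exact cls_eq.1 h2.symm

theorem red_sub {V W T : List (Ltr A)} (h : FreeGroup.IsReduced (V ++ W ++ T)) :
    FreeGroup.IsReduced W := by
  unfold FreeGroup.IsReduced at *
  exact (List.isChain_append.1 (List.isChain_append.1 h).1).2.1

theorem red_invRev {W : List (Ltr A)} (h : FreeGroup.IsReduced W) :
    FreeGroup.IsReduced (FreeGroup.invRev W) := by
  classical
  have h1 := FreeGroup.isReduced_toWord (x := (FreeGroup.mk W)⁻¹)
  rwa [FreeGroup.toWord_inv, FreeGroup.toWord_mk, h.reduce_eq] at h1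

theorem emb_attach {L : Subgroup (FreeGroup A)} (n : ℕ) : ∀ {D : Set (FreeGroup A)}
    (_ : ClosedIn L D)
    {u v : FreeGroup A} (_ : u ∈ D) (_ : v ∈ D) (w : List (Ltr A)) (_ : w.length ≤ n)
    (_ : w ≠ [])
    (_ : FreeGroup.IsReduced w) (_ : Exits D u w)
    (_ : Exits D v (FreeGroup.invRev w))
    {x y : FreeGroup A} (_ : x ∈ D) (_ : y ∈ D)
    (_ : x * y⁻¹ ∈ adj L (u * FreeGroup.mk w * v⁻¹)), x * y⁻¹ ∈ L := by
  induction n with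
  | zero =>
    intro D hD u v hu hv w hn hne
    exfalso
    exact hne (List.length_eq_zero_iff.1 (by omega))
  | succ n ih =>
    intro D hD u v hu hv w hn hne hw heu hev x y hx hy hxy
    obtain ⟨w', b, rfl⟩ : ∃ w' b, w = w' ++ [b] :=
      ⟨w.dropLast, w.getLast hne, (List.dropLast_append_getLast hne).symm⟩
    have hev' : v * ltr (Ltr.inv b) ∉ D := by
      apply hev (Ltr.inv b) (FreeGroup.invRev w')
      rw [FreeGroup.invRev_append]; rfl
    by_cases hl : cls L u = cls L v ∧ ∃ w0, w' = Ltr.inv b :: w0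
    · obtain ⟨huv, w0, rfl⟩ := hl
      set c := Ltr.inv b with hc
      have hbc : ltr b = (ltr c)⁻¹ := by rw [hc, ltr_inv, inv_inv]
      have huc : u * ltr c ∉ D := heu c _ rfl
      have hw0 : w0 ≠ [] := by
        rintro rfl
        simp [FreeGroup.IsReduced, hc, Ltr.inv] at hw
      let D' : Set (FreeGroup A) := D ∪ {g | ∃ h ∈ L, g = h * (u * ltr c)}
      have huD' : u * ltr c ∈ D' := Or.inr ⟨1, L.one_mem, by simp⟩
      have hDc : ClosedIn L D' := by
        refine ⟨Or.inl hD.one, ?_, ?_⟩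
        · rintro h hh g (hg | ⟨k, hk, rfl⟩)
          · exact Or.inl (hD.inv h hh g hg)
          · exact Or.inr ⟨h * k, L.mul_mem hh hk, by group⟩
        · rintro g (hg | ⟨k, hk, rfl⟩)
          · exact fun V hV => Or.inl (hD.pre g hg V hV)
          · have hku : k * u ∈ D := hD.inv k hk u hu
            have e : nw (k * (u * ltr c)) = nw (k * u) ++ [c] := by
              rw [← mul_assoc]
              apply exits_nw hD hku (z := [c]) (by simp [FreeGroup.IsReduced])
              intro x z' h
              simp at h
              obtain ⟨rfl, _⟩ := h
              rw [mul_assoc, hD.inv_iff hk]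
              exact huc
            rw [e]
            apply preIn_append
            · exact fun V hV => Or.inl (hD.pre _ hku V hV)
            · intro V hV
              rw [mk_nw]
              rcases List.prefix_concat_iff (l₁ := V) (l₂ := []) (a := c) |>.1 hV with h | h
              · subst h
                exact Or.inr ⟨k, hk, by rw [mul_assoc]; rfl⟩
              · rw [List.prefix_nil] at h
                subst h
                rw [mk_nil, mul_one]; exact Or.inl hku
      have huvL := cls_eq.1 huv
      have hadj : adj L (u * ltr c * FreeGroup.mk w0 * (u * ltr c)⁻¹) =
          adj L (u * FreeGroup.mk (c :: w0 ++ [b]) * v⁻¹) := by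
        have e : u * FreeGroup.mk (c :: w0 ++ [b]) * v⁻¹ =
            (u * ltr c * FreeGroup.mk w0 * (u * ltr c)⁻¹) * (u * v⁻¹) := by
          rw [mk_append, mk_cons]
          change u * (ltr c * FreeGroup.mk w0 * ltr b) * v⁻¹ = _
          rw [hbc]; group
        rw [e]
        apply le_antisymm
        · apply adj_le (le_adj _ _)
          have := Subgroup.mul_mem _ (mem_adj L (u * ltr c * FreeGroup.mk w0 * (u * ltr c)⁻¹ * (u * v⁻¹)))
            (Subgroup.inv_mem _ (le_adj L _ huvL))
          rwa [mul_inv_cancel_right] at this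
        · apply adj_le (le_adj _ _)
          exact Subgroup.mul_mem _ (mem_adj _ _) (le_adj _ _ huvL)
      have hw0r : FreeGroup.IsReduced w0 := red_sub (V := [c]) (T := [b]) hw
      -- exits from the new set
      have key : ∀ (d : Ltr A) (hr : FreeGroup.IsReduced [c, d]), u * ltr c * ltr d ∉ D' := by
        intro d hr
        have e : u * ltr c * ltr d = u * FreeGroup.mk [c, d] := by
          rw [mk_cons, mul_assoc]; rfl
        have hex : ∀ T, Exits D u (c :: T) := by
          intro T x z' h
          simp at h
          rw [← h.1]; exact huc
        rw [e]
        rintro (h | ⟨h, hh, h2⟩)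
        · exact exits_not_mem hD hu hr (hex _) (by simp) h
        · have := exits_inj' hD hu hu hr (z' := [c]) (by simp [FreeGroup.IsReduced]) (hex _)
            (hex _) (by
              rw [h2]
              change h * (u * ltr c) * (u * ltr c)⁻¹ ∈ L
              rwa [mul_inv_cancel_right])
          simp at this
      have := ih (D := D') hDc huD' huD' w0 (by simp at hn; omega) hw0 hw0r
        (by
          intro d z' h
          apply key
          subst h
          exact red_sub (V := []) (T := z' ++ [b]) (by simpa using hw))
        (by
          intro d z' h
          apply key
          have e : FreeGroup.invRev (c :: w0 ++ [b]) = c :: d :: z' ++ [b] := by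
            have : c :: w0 ++ [b] = [c] ++ w0 ++ [b] := by simp
            rw [this, FreeGroup.invRev_append, FreeGroup.invRev_append, h]
            simp [FreeGroup.invRev, hc, Ltr.inv]
          have h3 : FreeGroup.IsReduced (FreeGroup.invRev (c :: w0 ++ [b])) :=
            red_invRev hw
          rw [e] at h3
          exact red_sub (V := []) (T := z' ++ [b]) (by simpa using h3))
        (Or.inl hx) (Or.inl hy) (by rw [hadj]; exact hxy)
      exact this
    · exact emb_attach_main hD hu hv w' b hw heu hev' (fun h w0 hw0 => hl ⟨h, w0, hw0⟩) hx hy hxy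

end attach

/-! ### Part 4: the key lemma -/

section key

variable {A : Type}

/-- `K` is generated by `L` and `k` further elements. -/
def Gen : ℕ → Subgroup (FreeGroup A) → Subgroup (FreeGroup A) → Prop
  | 0, L, K => L = K
  | k + 1, L, K => ∃ t, Gen k (adj L t) K

theorem adj_mem_eq {L : Subgroup (FreeGroup A)} {t : FreeGroup A} (h : t ∈ L) : adj L t = L :=
  le_antisymm (adj_le le_rfl h) (le_adj _ _)

theorem adj_eq_of {L L' : Subgroup (FreeGroup A)} {s t s' t' : FreeGroup A} (h1 : L ≤ L')
    (hs : s ∈ adj (adj L' s') t') (ht : t ∈ adj (adj L' s') t') :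
    adj (adj L s) t ≤ adj (adj L' s') t' :=
  adj_le (adj_le (h1.trans ((le_adj _ _).trans (le_adj _ _))) hs) ht

theorem mem_adj1 (L : Subgroup (FreeGroup A)) (s t : FreeGroup A) : s ∈ adj (adj L s) t :=
  le_adj _ _ (mem_adj _ _)

theorem adj_comm (L : Subgroup (FreeGroup A)) (s t : FreeGroup A) :
    adj (adj L s) t = adj (adj L t) s :=
  le_antisymm (adj_eq_of le_rfl (mem_adj _ _) (mem_adj1 _ _ _))
    (adj_eq_of le_rfl (mem_adj _ _) (mem_adj1 _ _ _))

theorem adj_inv (L : Subgroup (FreeGroup A)) (t : FreeGroup A) : adj L t⁻¹ = adj L t := by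
  apply le_antisymm
  · exact adj_le (le_adj _ _) (Subgroup.inv_mem _ (mem_adj _ _))
  · refine adj_le (le_adj _ _) ?_
    have := Subgroup.inv_mem _ (mem_adj L t⁻¹)
    rwa [inv_inv] at this

theorem adj_mul_left {L : Subgroup (FreeGroup A)} {h : FreeGroup A} (hh : h ∈ L)
    (t : FreeGroup A) : adj L (h * t) = adj L t := by
  apply le_antisymm
  · exact adj_le (le_adj _ _) (Subgroup.mul_mem _ (le_adj _ _ hh) (mem_adj _ _))
  · refine adj_le (le_adj _ _) ?_
    have := Subgroup.mul_mem _ (Subgroup.inv_mem _ (le_adj _ (h * t) hh)) (mem_adj L (h * t))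
    rwa [inv_mul_cancel_left] at this

theorem adj_mul_both {L : Subgroup (FreeGroup A)} {h h' : FreeGroup A} (hh : h ∈ L)
    (hh' : h' ∈ L) (r s : FreeGroup A) :
    adj L ((h * r) * (h' * s)⁻¹) = adj L (r * s⁻¹) := by
  rw [mul_assoc, adj_mul_left hh, ← adj_inv, mul_inv_rev, inv_inv, mul_assoc, adj_mul_left hh',
    ← adj_inv]
  congr 1
  group

theorem nw_length_le (W : List (Ltr A)) : (nw (FreeGroup.mk W)).length ≤ W.length :=
  (red_nw W).length_le

theorem gen_le : ∀ {k : ℕ} {L K : Subgroup (FreeGroup A)}, Gen k L K → L ≤ K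
  | 0, _, _, h => le_of_eq h
  | _ + 1, _, _, ⟨_, h⟩ => (le_adj _ _).trans (gen_le h)

theorem key_step (k : ℕ) : ∀ {L K : Subgroup (FreeGroup A)}, Gen k L K → ¬ Emb L K →
    ∃ k', k = k' + 1 ∧ ∃ r ∈ core L, ∃ s ∈ core L, r * s⁻¹ ∉ L ∧ Gen k' (adj L (r * s⁻¹)) K := by
  induction k with
  | zero =>
    intro L K h hne
    cases h
    exact absurd (Emb.refl L) hne
  | succ k ih =>
    intro L K hgen hne
    classical
    let P : ℕ → Prop := fun c => ∃ u ∈ core L, ∃ v ∈ core L, ∃ w : List (Ltr A), w.length = c ∧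
      Gen k (adj L (u * FreeGroup.mk w * v⁻¹)) K
    have hP : ∃ c, P c := by
      obtain ⟨t, ht⟩ := hgen
      exact ⟨_, 1, (core_closed L).one, 1, (core_closed L).one, nw t, rfl, by simpa [mk_nw] using ht⟩
    obtain ⟨u, hu, v, hv, w', hwc, hG'⟩ := Nat.find_spec hP
    have hmin : ∀ u ∈ core L, ∀ v ∈ core L, ∀ w : List (Ltr A),
        Gen k (adj L (u * FreeGroup.mk w * v⁻¹)) K → Nat.find hP ≤ w.length :=
      fun u hu v hv w h => Nat.find_min' hP ⟨u, hu, v, hv, w, rfl, h⟩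
    set c := Nat.find hP with hc
    obtain ⟨w, hw, hwr, hG⟩ : ∃ w : List (Ltr A), w.length = c ∧ FreeGroup.IsReduced w ∧
        Gen k (adj L (u * FreeGroup.mk w * v⁻¹)) K := by
      have h1 := hmin u hu v hv (nw (FreeGroup.mk w')) (by rw [mk_nw]; exact hG')
      have h2 := nw_length_le w'
      exact ⟨nw (FreeGroup.mk w'), by omega, nw_red _, by rw [mk_nw]; exact hG'⟩
    by_cases hw0 : w = []
    · subst hw0
      rw [mk_nil, mul_one] at hG
      by_cases huv : u * v⁻¹ ∈ L
      · rw [adj_mem_eq huv] at hG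
        obtain ⟨k', rfl, r, hr, s, hs, hrs, hG2⟩ := ih hG hne
        refine ⟨k' + 1, rfl, r, hr, s, hs, hrs, 1, ?_⟩
        rw [adj_mem_eq (Subgroup.one_mem _)]
        exact hG2
      · exact ⟨k, rfl, u, hu, v, hv, huv, hG⟩
    exfalso
    have hex1 : Exits (core L) u w := by
      intro x z' hz hmem
      subst hz
      have := hmin (u * ltr x) hmem v hv z' (by
        rw [mk_cons] at hG
        simpa only [mul_assoc] using hG)
      simp at hw
      omega
    have hex2 : Exits (core L) v (FreeGroup.invRev w) := by
      intro x z' hz hmem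
      have e : w = FreeGroup.invRev z' ++ [Ltr.inv x] := by
        rw [← FreeGroup.invRev_invRev (L₁ := w), hz]
        have : x :: z' = [x] ++ z' := rfl
        rw [this, FreeGroup.invRev_append]; rfl
      have := hmin u hu (v * ltr x) hmem (FreeGroup.invRev z') (by
        rw [e, mk_append] at hG
        have e2 : FreeGroup.mk [Ltr.inv x] = (ltr x)⁻¹ := ltr_inv x
        rw [e2] at hG
        have e3 : u * FreeGroup.mk (FreeGroup.invRev z') * (v * ltr x)⁻¹ =
          u * (FreeGroup.mk (FreeGroup.invRev z') * (ltr x)⁻¹) * v⁻¹ := by group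
        rw [e3]; exact hG)
      rw [e] at hw
      simp at hw this
      omega
    set t := u * FreeGroup.mk w * v⁻¹ with ht
    have hemb : Emb L (adj L t) :=
      ⟨le_adj _ _, fun x hx y hy hxy =>
        emb_attach w.length (core_closed L) hu hv w le_rfl hw0 hwr hex1 hex2 hx hy hxy⟩
    have hne2 : ¬ Emb (adj L t) K := fun h => hne (hemb.trans h)
    obtain ⟨k', rfl, r, hr, s, hs, hrs, hG2⟩ := ih hG hne2
    have norm : ∀ g ∈ core (adj L t), ∃ h ∈ adj L t, ∃ g', g = h * g' ∧ (g' ∈ core L ∨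
        ∃ w1 w2, w = w1 ++ w2 ∧ w2 ≠ [] ∧ g' = u * FreeGroup.mk w1) := by
      intro g hg
      obtain ⟨h, hh, ⟨c, hc, rfl⟩ | ⟨w1, w2, hww, rfl⟩⟩ := core_adj hu hv w hg
      · exact ⟨h, hh, c, rfl, Or.inl hc⟩
      · by_cases hw2 : w2 = []
        · subst hw2
          rw [List.append_nil] at hww
          subst hww
          refine ⟨h * t, Subgroup.mul_mem _ hh (mem_adj _ _), v, ?_, Or.inl hv⟩
          rw [ht]; group
        · exact ⟨h, hh, _, rfl, Or.inr ⟨w1, w2, hww, hw2, rfl⟩⟩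
    have contra : ∀ e', ∀ u ∈ core L, ∀ v ∈ core L, ∀ w1 : List (Ltr A), w1.length < c →
        ∀ N, N = adj (adj L (u * FreeGroup.mk w1 * v⁻¹)) e' → Gen k' N K → False := by
      rintro e' u hu v hv w1 hlt N rfl hg
      have := hmin u hu v hv w1 ⟨e', hg⟩
      omega
    obtain ⟨h, hh, r', rfl, hr'⟩ := norm r hr
    obtain ⟨h', hh', s', rfl, hs'⟩ := norm s hs
    rw [adj_mul_both hh hh'] at hG2
    have hrs' : r' * s'⁻¹ ∉ adj L t := by
      intro hx
      apply hrs
      have := Subgroup.mul_mem _ (Subgroup.mul_mem _ hh hx) (Subgroup.inv_mem _ hh')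
      simpa [mul_assoc] using this
    have hcpos : 0 < c := by
      rw [← hw]; exact List.length_pos_iff.2 hw0
    have case1 : ∀ r s, s ∈ core L → (r ∈ core L ∨
        ∃ w1 w2, w = w1 ++ w2 ∧ w2 ≠ [] ∧ r = u * FreeGroup.mk w1) →
        Gen k' (adj (adj L t) (r * s⁻¹)) K → False := by
      rintro r s hs (hr | ⟨w1, w2, hww, hw2, rfl⟩) hg
      · refine contra t r hr s hs [] hcpos _ ?_ hg
        rw [mk_nil, mul_one, adj_comm]
      · refine contra t u hu s hs w1 ?_ _ (adj_comm _ _ _) hg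
        rw [← hw, hww, List.length_append]
        have := List.length_pos_iff.2 hw2
        omega
    have case2 : ∀ w1 m w3 : List (Ltr A), w = w1 ++ m ++ w3 → m ≠ [] →
        Gen k' (adj (adj L t) ((u * FreeGroup.mk w1) * (u * FreeGroup.mk (w1 ++ m))⁻¹)) K →
        False := by
      intro w1 m w3 hww hm hg
      refine contra ((u * FreeGroup.mk w1) * (u * FreeGroup.mk (w1 ++ m))⁻¹) u hu v hv (w1 ++ w3)
        ?_ _ ?_ hg
      · rw [← hw, hww]
        have := List.length_pos_iff.2 hm
        simp
        omega
      · set e' := (u * FreeGroup.mk w1) * (u * FreeGroup.mk (w1 ++ m))⁻¹ with he'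
        have e1 : t = e'⁻¹ * (u * FreeGroup.mk (w1 ++ w3) * v⁻¹) := by
          rw [ht, he', hww]
          simp only [mk_append]
          group
        have e2 : u * FreeGroup.mk (w1 ++ w3) * v⁻¹ = e' * t := by
          rw [e1]; group
        apply le_antisymm
        · refine adj_eq_of le_rfl ?_ (mem_adj _ _)
          rw [e1]
          exact Subgroup.mul_mem _ (Subgroup.inv_mem _ (mem_adj _ _)) (mem_adj1 _ _ _)
        · refine adj_eq_of le_rfl ?_ (mem_adj _ _)
          rw [e2]
          exact Subgroup.mul_mem _ (mem_adj _ _) (mem_adj1 _ _ _)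
    have flip : Gen k' (adj (adj L t) (s' * r'⁻¹)) K := by
      rw [← adj_inv]
      have : (s' * r'⁻¹)⁻¹ = r' * s'⁻¹ := by group
      rw [this]; exact hG2
    rcases hs' with hs' | ⟨w1, w2, hww, hw2, rfl⟩
    · exact case1 r' s' hs' hr' hG2
    rcases hr' with hr' | ⟨w1', w2', hww', hw2', rfl⟩
    · exact case1 _ r' hr' (Or.inr ⟨w1, w2, hww, hw2, rfl⟩) flip
    rcases List.append_eq_append_iff.1 (hww.symm.trans hww') with ⟨m, hm1, hm2⟩ | ⟨m, hm1, hm2⟩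
    · subst hm1
      refine case2 w1 m w2' hww' ?_ flip
      rintro rfl
      apply hrs'
      rw [List.append_nil, mul_inv_cancel]
      exact Subgroup.one_mem _
    · subst hm1
      refine case2 w1' m w2 hww ?_ hG2
      rintro rfl
      apply hrs'
      rw [List.append_nil, mul_inv_cancel]
      exact Subgroup.one_mem _

end key

/-! ### Part 5: graph embeddings give free factors -/

section skew

variable {A : Type}

theorem exists_transversal {X G : Type} [Group G] (Δ : Set X) (dist : X → ℕ) (base : X → G)
    (par : X → X) (lab : X → G) (hlt : ∀ x, x ∉ Δ → dist (par x) < dist x) :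
    ∃ σ : X → G, (∀ x ∈ Δ, σ x = base x) ∧ ∀ x, x ∉ Δ → σ x = σ (par x) * lab x := by
  classical
  let F : (x : X) → ((y : X) → dist y < dist x → G) → G := fun x rec =>
    if h : x ∈ Δ then base x else rec (par x) (hlt x h) * lab x
  let wf : WellFounded (fun y x : X => dist y < dist x) := (measure dist).wf
  refine ⟨wf.fix F, ?_, ?_⟩
  · intro x hx
    rw [WellFounded.fix_eq]
    simp [F, hx]
  · intro x hx
    conv_lhs => rw [WellFounded.fix_eq]
    simp [F, hx]

theorem cls_dist (K : Subgroup (FreeGroup A)) : ∃ (dist : Cos K → ℕ),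
    ∀ x, x ≠ cls K 1 → ∃ y ℓ, dist y < dist x ∧ x = rmul K (ltr ℓ) y := by
  classical
  have hex : ∀ x : Cos K, ∃ n, ∃ W : List (Ltr A), W.length = n ∧ cls K (FreeGroup.mk W) = x := by
    intro x
    obtain ⟨g, rfl⟩ := cls_surj x
    exact ⟨_, nw g, rfl, by rw [mk_nw]⟩
  refine ⟨fun x => Nat.find (hex x), ?_⟩
  intro x hx
  obtain ⟨W, hW, hWx⟩ := Nat.find_spec (hex x)
  rcases List.eq_nil_or_concat W with rfl | ⟨V, ℓ, rfl⟩
  · exact absurd hWx.symm hx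
  · refine ⟨cls K (FreeGroup.mk V), ℓ, ?_, ?_⟩
    · have := Nat.find_min' (hex (cls K (FreeGroup.mk V))) ⟨V, rfl, rfl⟩
      simp at hW
      change Nat.find (hex _) < Nat.find (hex _)
      omega
    · rw [rmul_cls, ← hWx, List.concat_eq_append, mk_append]; rfl

/-- the skew permutation -/
def skewP {X G : Type} [Group G] (R : A → Equiv.Perm X) (f : X → A → G) (a : A) :
    Equiv.Perm (X × G) where
  toFun p := (R a p.1, p.2 * f p.1 a)
  invFun p := ((R a).symm p.1, p.2 * (f ((R a).symm p.1) a)⁻¹)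
  left_inv := by rintro ⟨x, g⟩; simp
  right_inv := by rintro ⟨x, g⟩; simp

theorem skew_true {X G : Type} [Group G] (R : A → Equiv.Perm X) (f : X → A → G) (a : A)
    (x : X) (g : G) : ra (skewP R f) (ltr (a, true)) (x, g) = (R a x, g * f x a) := by
  rw [ra_ltr]; rfl

theorem skew_false {X G : Type} [Group G] (R : A → Equiv.Perm X) (f : X → A → G) (a : A)
    (x y : X) (g h : G) (h1 : R a x = y) (h2 : g * f x a = h) :
    ra (skewP R f) (ltr (a, false)) (y, h) = (x, g) := by
  rw [ra_ltr]
  simp only [Bool.false_eq_true, if_false]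
  rw [Equiv.symm_apply_eq]
  change _ = (R a x, g * f x a)
  rw [h1, h2]

theorem ra_inv {X : Type} (P : A → Equiv.Perm X) (g : FreeGroup A) (x y : X)
    (h : ra P g x = y) : ra P g⁻¹ y = x := by
  rw [← h, ← ra_mul, mul_inv_cancel, ra_one]

theorem emb_freeFactor {L K : Subgroup (FreeGroup A)} (h : Emb L K) : FreeFactor L K := by
  classical
  obtain ⟨B, hB⟩ := exists_basis L
  let x0 := cls K 1
  let Δ : Set (Cos K) := {x | ∃ g ∈ core L, cls K g = x}
  have hx0 : x0 ∈ Δ := ⟨1, (core_closed L).one, rfl⟩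
  obtain ⟨dist, hdist⟩ := cls_dist K
  have hdist' : ∀ x, ∃ (y : Cos K) (c : FreeGroup A), x ∉ Δ →
      dist y < dist x ∧ ∃ ℓ, c = ltr ℓ ∧ x = rmul K (ltr ℓ) y := by
    intro x
    by_cases hx : x ∈ Δ
    · exact ⟨x, 1, fun h => absurd hx h⟩
    · obtain ⟨y, ℓ, hy⟩ := hdist x (by rintro rfl; exact hx hx0)
      exact ⟨y, ltr ℓ, fun _ => ⟨hy.1, ℓ, rfl, hy.2⟩⟩
  choose par lab hpl using hdist'
  have hbase : ∀ x : Cos K, ∃ g, (x ∈ Δ → g ∈ core L ∧ cls K g = x) ∧ (x = x0 → g = 1) := by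
    intro x
    by_cases hx : x = x0
    · subst hx
      exact ⟨1, fun _ => ⟨(core_closed L).one, rfl⟩, fun _ => rfl⟩
    · by_cases hx2 : x ∈ Δ
      · obtain ⟨g, hg, hgx⟩ := hx2
        exact ⟨g, fun _ => ⟨hg, hgx⟩, fun h => absurd h hx⟩
      · exact ⟨1, fun h => absurd h hx2, fun _ => rfl⟩
  choose base hbase1 hbase2 using hbase
  obtain ⟨σ, hσ1, hσ2⟩ := exists_transversal Δ dist base par lab (fun x hx => (hpl x hx).1)
  have hσ0 : σ x0 = 1 := by rw [hσ1 x0 hx0]; exact hbase2 x0 rfl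
  have hσc : ∀ x, cls K (σ x) = x := by
    intro x
    induction hn : dist x using Nat.strong_induction_on generalizing x with
    | _ n ih =>
      by_cases hx : x ∈ Δ
      · rw [hσ1 x hx]; exact (hbase1 x hx).2
      · obtain ⟨h1, ℓ, h2, h3⟩ := hpl x hx
        rw [hσ2 x hx, h2, ← rmul_cls, ih _ (by omega) (par x) rfl]
        exact h3.symm
  have hσΔ : ∀ x ∈ Δ, σ x ∈ core L := fun x hx => by rw [hσ1 x hx]; exact (hbase1 x hx).1
  have hcoreσ : ∀ u ∈ core L, u * (σ (cls K u))⁻¹ ∈ L := by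
    intro u hu
    apply h.2 u hu _ (hσΔ _ ⟨u, hu, rfl⟩)
    rw [← cls_eq, hσc]
  let R : A → Equiv.Perm (Cos K) := fun a => rmul K (FreeGroup.of a)
  let t : Cos K → A → FreeGroup A := fun x a => σ x * FreeGroup.of a * (σ (R a x))⁻¹
  have htK : ∀ x a, t x a ∈ K := by
    intro x a
    rw [← cls_eq, hσc, ← rmul_cls, hσc]
  let T : Type := {p : Cos K × A // t p.1 p.2 ∉ L}
  let G := FreeGroup (B ⊕ T)
  let φ : L →* G := (FreeGroup.map (Sum.inl : B → B ⊕ T)).comp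
    (basisEquiv hB).symm.toMonoidHom
  let Φ : FreeGroup A → G := fun g => if hg : g ∈ L then φ ⟨g, hg⟩ else 1
  have hΦm : ∀ x y, x ∈ L → y ∈ L → Φ (x * y) = Φ x * Φ y := by
    intro x y hx hy
    simp only [Φ, dif_pos hx, dif_pos hy, dif_pos (L.mul_mem hx hy)]
    rw [← map_mul]; rfl
  have hΦ1 : Φ 1 = 1 := by
    simp only [Φ, dif_pos L.one_mem]
    exact map_one φ
  have hΦB : ∀ b : B, Φ b = FreeGroup.of (Sum.inl b) := by
    intro b
    have hb : (b : FreeGroup A) ∈ L := by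
      rw [← hB.1]; exact Subgroup.subset_closure b.2
    simp only [Φ, dif_pos hb]
    have : (⟨b, hb⟩ : L) = basisEquiv hB (FreeGroup.of b) := by
      apply Subtype.ext
      rw [basisEquiv_coe, FreeGroup.lift_apply_of]
    change FreeGroup.map Sum.inl ((basisEquiv hB).symm ⟨b, hb⟩) = _
    rw [this, MulEquiv.symm_apply_apply, FreeGroup.map.of]
  let f : Cos K → A → G := fun x a =>
    if ht : t x a ∈ L then Φ (t x a) else FreeGroup.of (Sum.inr ⟨(x, a), ht⟩)
  let P := skewP R f
  have hRc : ∀ a g, R a (cls K g) = cls K (g * FreeGroup.of a) := fun a g => rfl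
  -- edges in the core
  have hedge : ∀ u ∈ core L, ∀ a, u * FreeGroup.of a ∈ core L →
      Φ (u * (σ (cls K u))⁻¹) * f (cls K u) a =
        Φ (u * FreeGroup.of a * (σ (cls K (u * FreeGroup.of a)))⁻¹) := by
    intro u hu a hua
    have h1 := hcoreσ u hu
    have h2 := hcoreσ _ hua
    have h3 : t (cls K u) a = (u * (σ (cls K u))⁻¹)⁻¹ *
        (u * FreeGroup.of a * (σ (cls K (u * FreeGroup.of a)))⁻¹) := by
      simp only [t, hRc]
      group
    have h4 : t (cls K u) a ∈ L := by
      rw [h3]; exact L.mul_mem (L.inv_mem h1) h2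
    simp only [f, dif_pos h4]
    rw [← hΦm _ _ h1 h4, h3, mul_inv_cancel_left]
  have hletter : ∀ u ∈ core L, ∀ ℓ, u * ltr ℓ ∈ core L → ∀ g,
      ra P (ltr ℓ) (cls K u, g * Φ (u * (σ (cls K u))⁻¹)) =
        (cls K (u * ltr ℓ), g * Φ (u * ltr ℓ * (σ (cls K (u * ltr ℓ)))⁻¹)) := by
    rintro u hu ⟨a, b⟩ hul g
    cases b
    · have e : ltr (a, false) = (FreeGroup.of a)⁻¹ := rfl
      apply skew_false
      · rw [hRc, e, inv_mul_cancel_right]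
      · rw [e] at hul ⊢
        rw [mul_assoc g, hedge _ hul a (by simpa using hu)]
        simp
    · have e : ltr (a, true) = FreeGroup.of a := rfl
      rw [skew_true, hRc, mul_assoc g]
      rw [e] at hul ⊢
      rw [hedge u hu a hul]
  have hcore : ∀ u ∈ core L, ∀ g, ra P u (x0, g) = (cls K u, g * Φ (u * (σ (cls K u))⁻¹)) := by
    intro u hu g
    have : ∀ W : List (Ltr A), PreIn (core L) W → ra P (FreeGroup.mk W) (x0, g) =
        (cls K (FreeGroup.mk W), g * Φ (FreeGroup.mk W * (σ (cls K (FreeGroup.mk W)))⁻¹)) := by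
      intro W
      induction W using List.reverseRecOn with
      | nil =>
        intro _
        rw [mk_nil, ra_one]
        change _ = (x0, g * Φ (1 * (σ x0)⁻¹))
        rw [hσ0]
        simp [hΦ1]
      | append_singleton W x ih =>
        intro hW
        rw [mk_append, ra_mul, ih (fun V hV => hW V (hV.trans (List.prefix_append _ _)))]
        apply hletter _ (hW W (List.prefix_append _ _))
        have := hW _ (List.prefix_refl _)
        rwa [mk_append] at this
    have := this (nw u) ((core_closed L).pre u hu)
    rwa [mk_nw] at this
  have hσp : ∀ x g, ra P (σ x) (x0, g) = (x, g) := by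
    intro x
    induction hn : dist x using Nat.strong_induction_on generalizing x with
    | _ n ih =>
      intro g
      by_cases hx : x ∈ Δ
      · rw [hcore _ (hσΔ x hx), hσc]
        simp [hΦ1]
      · obtain ⟨h1, ⟨a, b⟩, h2, h3⟩ := hpl x hx
        rw [hσ2 x hx, ra_mul, ih _ (by omega) (par x) rfl, h2]
        have h4 := hσ2 x hx
        rw [h2] at h4
        cases b
        · have e : ltr (a, false) = (FreeGroup.of a)⁻¹ := rfl
          have h5 : R a x = par x := by
            obtain ⟨y, hy⟩ := cls_surj (par x)
            rw [← hy, rmul_cls, e] at h3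
            rw [← hy, h3, hRc, inv_mul_cancel_right]
          have h6 : t x a = 1 := by
            simp only [t]
            rw [h5, h4, e]; group
          apply skew_false
          · exact h5
          · simp [f, h6, L.one_mem, hΦ1]
        · have e : ltr (a, true) = FreeGroup.of a := rfl
          have h5 : R a (par x) = x := h3.symm
          have h6 : t (par x) a = 1 := by
            simp only [t]
            rw [h5, h4, e]; group
          rw [skew_true, h5]
          simp [f, h6, L.one_mem, hΦ1]
  let F : B ⊕ T → FreeGroup A := Sum.elim Subtype.val (fun p => t p.1.1 p.1.2)
  have hι : ∀ γ g, ra P (FreeGroup.lift F γ) (x0, g) = (x0, g * γ) := by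
    intro γ
    induction γ using FreeGroup.induction_on with
    | C1 => intro g; rw [map_one, ra_one, mul_one]
    | of i =>
      intro g
      change ra P (FreeGroup.lift F (FreeGroup.of i)) (x0, g) = (x0, g * FreeGroup.of i)
      rw [FreeGroup.lift_apply_of]
      rcases i with b | ⟨⟨x, a⟩, hT⟩
      · have hb : (b : FreeGroup A) ∈ L := by
          rw [← hB.1]; exact Subgroup.subset_closure b.2
        change ra P (b : FreeGroup A) (x0, g) = _
        have hbx : cls K (b : FreeGroup A) = x0 := by
          rw [cls_eq]; simpa using h.1 hb
        rw [hcore _ ((core_closed L).sub hb), hbx, hσ0]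
        simp [hΦB]
      · change ra P (σ x * FreeGroup.of a * (σ (R a x))⁻¹) (x0, g) = _
        rw [ra_mul, ra_mul, hσp]
        have e : FreeGroup.of a = ltr (a, true) := rfl
        rw [e, skew_true]
        apply ra_inv
        rw [hσp]
        simp only [f, dif_neg hT]
    | inv_of i ih =>
      intro g
      rw [map_inv]
      apply ra_inv
      rw [ih]
      change (x0, g * (FreeGroup.of i)⁻¹ * FreeGroup.of i) = _
      rw [inv_mul_cancel_right]
    | mul x y ihx ihy =>
      intro g
      rw [map_mul, ra_mul, ihx, ihy, mul_assoc]
  have hinj : Injective (FreeGroup.lift F) := by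
    intro γ γ' hg
    have h1 := hι γ 1
    rw [hg, hι γ' 1] at h1
    simpa using (Prod.ext_iff.1 h1).2.symm
  have hclos : Subgroup.closure (Set.range F) = K := by
    apply le_antisymm
    · rw [Subgroup.closure_le]
      rintro _ ⟨b | p, rfl⟩
      · apply h.1
        rw [← hB.1]; exact Subgroup.subset_closure b.2
      · exact htK _ _
    · set K' := Subgroup.closure (Set.range F) with hK'
      have hLK : L ≤ K' := by
        rw [← hB.1, Subgroup.closure_le]
        intro b hb
        exact Subgroup.subset_closure ⟨Sum.inl ⟨b, hb⟩, rfl⟩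
      have htK' : ∀ x a, t x a ∈ K' := by
        intro x a
        by_cases ht : t x a ∈ L
        · exact hLK ht
        · exact Subgroup.subset_closure ⟨Sum.inr ⟨(x, a), ht⟩, rfl⟩
      have hall : ∀ W : List (Ltr A), FreeGroup.mk W * (σ (cls K (FreeGroup.mk W)))⁻¹ ∈ K' := by
        intro W
        induction W using List.reverseRecOn with
        | nil =>
          have : σ (cls K (FreeGroup.mk [])) = 1 := hσ0
          rw [this, mk_nil]; simp
        | append_singleton W x ih =>
          obtain ⟨a, b⟩ := x
          rw [mk_append]
          set g := FreeGroup.mk W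
          cases b
          · change g * (FreeGroup.of a)⁻¹ * (σ (cls K (g * (FreeGroup.of a)⁻¹)))⁻¹ ∈ K'
            have h1 := K'.mul_mem ih (K'.inv_mem (htK' (cls K (g * (FreeGroup.of a)⁻¹)) a))
            simp only [t, hRc, inv_mul_cancel_right] at h1
            convert h1 using 1
            group
          · change g * FreeGroup.of a * (σ (cls K (g * FreeGroup.of a)))⁻¹ ∈ K'
            have h1 := K'.mul_mem ih (htK' (cls K g) a)
            simp only [t, hRc] at h1
            convert h1 using 1
            group
      intro k hk
      have h1 := hall (nw k)
      have h2 : cls K k = x0 := by rw [cls_eq]; simpa using hk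
      rw [mk_nw, h2, hσ0] at h1
      simpa using h1
  refine ⟨B, Set.range F, hB, basis_of_family F K hclos hinj, ?_⟩
  intro b hb
  exact ⟨Sum.inl ⟨b, hb⟩, rfl⟩

end skew

/-! ### Part 6: ranks and free factors -/

section ranks

variable {A : Type}

theorem gen_family : ∀ {k : ℕ} {L K : Subgroup (FreeGroup A)}, Gen k L K →
    ∃ f : Fin k → FreeGroup A, L ⊔ Subgroup.closure (Set.range f) = K
  | 0, L, K, h => ⟨fun i => i.elim0, by
      cases h
      have : Set.range (fun i : Fin 0 => (i.elim0 : FreeGroup A)) = ∅ := by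
        ext x; simp
      rw [this, Subgroup.closure_empty, sup_bot_eq]⟩
  | k + 1, L, K, ⟨t, h⟩ => by
      obtain ⟨f, hf⟩ := gen_family h
      refine ⟨Fin.cons t f, ?_⟩
      rw [Fin.range_cons, Set.insert_eq, Subgroup.closure_union, ← sup_assoc]
      exact hf

theorem gen_basis_aux {k : ℕ} {L K : Subgroup (FreeGroup A)} (hL : L.FG) (h : Gen k L K) :
    rk K ≤ rk L + k ∧ (rk L + k ≤ rk K → FreeFactor L K) ∧ K.FG := by
  obtain ⟨f, hf⟩ := gen_family h
  obtain ⟨B, hB⟩ := exists_basis L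
  have hBf : Finite B := (fg_basis_finite hL hB).to_subtype
  let F : B ⊕ Fin k → FreeGroup A := Sum.elim Subtype.val f
  have hcl : Subgroup.closure (Set.range F) = K := by
    rw [Set.Sum.elim_range, Subtype.range_val, Subgroup.closure_union, hB.1, hf]
  obtain ⟨C, hC⟩ := exists_basis K
  obtain ⟨h1, h2, h3⟩ := rk_gen F hcl hC
  have hcard : Nat.card (B ⊕ Fin k) = rk L + k := by
    rw [Nat.card_sum, rk_eq hB, Nat.card_coe_set_eq, Nat.card_eq_fintype_card, Fintype.card_fin]
  rw [hcard] at h2 h3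
  refine ⟨h2, fun h => ⟨B, Set.range F, hB, basis_of_family F K hcl (h3 h), ?_⟩, ?_⟩
  · intro b hb
    exact ⟨Sum.inl ⟨b, hb⟩, rfl⟩
  · rw [Subgroup.fg_iff]
    exact ⟨Set.range F, hcl, Set.finite_range F⟩

theorem gen_of_finite {S : Set (FreeGroup A)} (hS : S.Finite) : ∀ L : Subgroup (FreeGroup A),
    Gen S.ncard L (L ⊔ Subgroup.closure S) := by
  induction S, hS using Set.Finite.induction_on with
  | empty =>
    intro L
    rw [Set.ncard_empty, Subgroup.closure_empty, sup_bot_eq]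
    rfl
  | @insert a s ha hs ih =>
    intro L
    rw [Set.ncard_insert_of_notMem ha hs]
    refine ⟨a, ?_⟩
    rw [Set.insert_eq, Subgroup.closure_union, ← sup_assoc]
    exact ih (adj L a)

theorem gen_of_freeFactor {L K : Subgroup (FreeGroup A)} (hK : K.FG) (h : FreeFactor L K)
    (d : ℕ) (hd : rk K = rk L + d) : Gen d L K := by
  obtain ⟨B, C, hB, hC, hBC⟩ := h
  have hCf := fg_basis_finite hK hC
  have h1 := gen_of_finite (hCf.subset Set.sdiff_subset : (C \ B).Finite) L
  have h2 : L ⊔ Subgroup.closure (C \ B) = K := by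
    rw [← hB.1, ← Subgroup.closure_union, Set.union_sdiff_cancel hBC, hC.1]
  have h3 := Set.ncard_sdiff_add_ncard_of_subset hBC hCf
  rw [← rk_eq hB, ← rk_eq hC] at h3
  have h4 : (C \ B).ncard = d := by omega
  rwa [h2, h4] at h1

theorem freeFactor_trans {H L K : Subgroup (FreeGroup A)} (hK : K.FG) (h1 : FreeFactor H L)
    (h2 : FreeFactor L K) : FreeFactor H K := by
  obtain ⟨B, C, hB, hC, hBC⟩ := h1
  obtain ⟨B', C', hB', hC', hBC'⟩ := h2
  have hCf' := fg_basis_finite hK hC'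
  have hBf' := hCf'.subset hBC'
  have hLfg : L.FG := by
    rw [Subgroup.fg_iff]
    exact ⟨B', hB'.1, hBf'⟩
  have hCf := fg_basis_finite hLfg hC
  have : Finite C := hCf.to_subtype
  have : Finite (C' \ B' : Set (FreeGroup A)) := (hCf'.subset Set.sdiff_subset).to_subtype
  let F : C ⊕ (C' \ B' : Set (FreeGroup A)) → FreeGroup A := Sum.elim Subtype.val Subtype.val
  have hr : Set.range F = C ∪ (C' \ B') := by
    rw [Set.Sum.elim_range, Subtype.range_val, Subtype.range_val]
  have hcl : Subgroup.closure (Set.range F) = K := by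
    rw [hr, Subgroup.closure_union, hC.1, ← hB'.1, ← Subgroup.closure_union,
      Set.union_sdiff_cancel hBC', hC'.1]
  obtain ⟨-, -, h3⟩ := rk_gen F hcl hC'
  have hinj := h3 (by
    rw [Nat.card_sum, Nat.card_coe_set_eq, Nat.card_coe_set_eq, ← rk_eq hC, rk_eq hB', rk_eq hC']
    have := Set.ncard_sdiff_add_ncard_of_subset hBC' hCf'
    omega)
  refine ⟨B, Set.range F, hB, basis_of_family F K hcl hinj, ?_⟩
  rw [hr]
  exact hBC.trans Set.subset_union_left

end ranks

/-! ### Part 7: automata -/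

section automata

variable {A : Type}

namespace Autom

theorem path_nil (M : Autom A) (p : M.Q) : M.Path p [] p := PathOn.nil p

theorem path_cons {M : Autom A} {p q r : M.Q} {a : Ltr A} {w : List (Ltr A)}
    (h : (p, a, q) ∈ M.E) (h' : M.Path q w r) : M.Path p (a :: w) r := PathOn.cons h h'

theorem path_nil_iff {M : Autom A} {p q : M.Q} : M.Path p [] q ↔ p = q := by
  constructor
  · intro h; cases h; rfl
  · rintro rfl; exact path_nil M p

theorem path_cons_iff {M : Autom A} {p r : M.Q} {a : Ltr A} {w : List (Ltr A)} :
    M.Path p (a :: w) r ↔ ∃ q, (p, a, q) ∈ M.E ∧ M.Path q w r := by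
  constructor
  · intro h
    cases h with
    | cons h h' => exact ⟨_, h, h'⟩
  · rintro ⟨q, h, h'⟩
    exact path_cons h h'

theorem path_append_iff {M : Autom A} {p r : M.Q} {u v : List (Ltr A)} :
    M.Path p (u ++ v) r ↔ ∃ q, M.Path p u q ∧ M.Path q v r := by
  induction u generalizing p with
  | nil =>
    simp only [List.nil_append, path_nil_iff]
    simp
  | cons a u ih =>
    simp only [List.cons_append, path_cons_iff, ih]
    constructor
    · rintro ⟨q, h1, q', h2, h3⟩
      exact ⟨q', ⟨q, h1, h2⟩, h3⟩
    · rintro ⟨q', ⟨q, h1, h2⟩, h3⟩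
      exact ⟨q, h1, q', h2, h3⟩

theorem path_append {M : Autom A} {p q r : M.Q} {u v : List (Ltr A)}
    (h : M.Path p u q) (h' : M.Path q v r) : M.Path p (u ++ v) r :=
  path_append_iff.2 ⟨q, h, h'⟩

theorem path_single {M : Autom A} {p q : M.Q} {a : Ltr A} :
    M.Path p [a] q ↔ (p, a, q) ∈ M.E := by
  rw [path_cons_iff]
  constructor
  · rintro ⟨r, h1, h2⟩
    rw [path_nil_iff] at h2
    exact h2 ▸ h1
  · intro h
    exact ⟨q, h, path_nil M q⟩

theorem invRev_cons (a : Ltr A) (u : List (Ltr A)) :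
    FreeGroup.invRev (a :: u) = FreeGroup.invRev u ++ [Ltr.inv a] := by
  have : a :: u = [a] ++ u := rfl
  rw [this, FreeGroup.invRev_append]; rfl

theorem path_inv {M : Autom A} (hd : M.Dual) {p q : M.Q} {u : List (Ltr A)}
    (h : M.Path p u q) : M.Path q (FreeGroup.invRev u) p := by
  induction u generalizing p with
  | nil =>
    rw [path_nil_iff] at h
    subst h
    exact path_nil M p
  | cons a u ih =>
    obtain ⟨r, h1, h2⟩ := path_cons_iff.1 h
    rw [invRev_cons]
    exact path_append (ih h2) (path_single.2 ((hd _ _ _).1 h1))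

theorem path_det {M : Autom A} (hd : M.Deterministic) {p q q' : M.Q} {u : List (Ltr A)}
    (h : M.Path p u q) (h' : M.Path p u q') : q = q' := by
  induction u generalizing p with
  | nil =>
    rw [path_nil_iff] at h h'
    exact h.symm.trans h'
  | cons a u ih =>
    obtain ⟨r, h1, h2⟩ := path_cons_iff.1 h
    obtain ⟨r', h1', h2'⟩ := path_cons_iff.1 h'
    obtain rfl := hd _ _ _ _ h1 h1'
    exact ih h2 h2'

theorem path_step {M : Autom A} (hd : M.Deterministic) (hdu : M.Dual) {p q : M.Q}
    {u v : List (Ltr A)} (hs : FreeGroup.Red.Step u v) (h : M.Path p u q) : M.Path p v q := by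
  cases hs with
  | @not W₁ W₂ a b =>
    obtain ⟨r, h1, h2⟩ := path_append_iff.1 h
    obtain ⟨r1, h3, h4⟩ := path_cons_iff.1 h2
    obtain ⟨r2, h5, h6⟩ := path_cons_iff.1 h4
    have h7 : (r1, (a, !b), r) ∈ M.E := (hdu _ _ _).1 h3
    obtain rfl := hd _ _ _ _ h5 h7
    exact path_append h1 h6

theorem path_nw {M : Autom A} (hd : M.Deterministic) (hdu : M.Dual) {p q : M.Q}
    {u : List (Ltr A)} (h : M.Path p u q) : M.Path p (nw (FreeGroup.mk u)) q := by
  have : ∀ v, FreeGroup.Red u v → M.Path p v q := by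
    intro v hv
    induction hv with
    | refl => exact h
    | tail _ hs ih => exact path_step hd hdu hs ih
  exact this _ (red_nw u)

theorem path_mk_det {M : Autom A} (hd : M.Deterministic) (hdu : M.Dual) {p q q' : M.Q}
    {u v : List (Ltr A)} (h : M.Path p u q) (h' : M.Path p v q')
    (huv : FreeGroup.mk u = FreeGroup.mk v) : q = q' := by
  have h1 := path_nw hd hdu h
  rw [huv] at h1
  exact path_det hd h1 (path_nw hd hdu h')

theorem isReducedWord_iff (w : List (Ltr A)) : IsReducedWord w ↔ FreeGroup.IsReduced w := by
  constructor
  · intro h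
    have h1 : ∀ V W : List (Ltr A), FreeGroup.Red.Step V W → V ≠ w := by
      rintro _ _ ⟨⟩ h2
      exact h _ _ _ _ h2.symm
    have h2 := red_nw w
    rcases Relation.ReflTransGen.cases_head h2 with h3 | ⟨c, h3, _⟩
    · rw [h3]; exact nw_red _
    · exact absurd rfl (h1 _ _ h3)
  · intro h u v a b hw
    subst hw
    have := red_sub (V := u) (W := [(a, b), (a, !b)]) (T := v) (by simpa using h)
    simp [FreeGroup.IsReduced] at this

/-- Basic invariant -/
structure Good (M : Autom A) (H : Subgroup (FreeGroup A)) : Prop where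
  dual : M.Dual
  conn : ∀ q, ∃ u, M.Path M.q0 u q
  lang : M.langRho = ↑H

theorem Good.loop {M : Autom A} {H : Subgroup (FreeGroup A)} (h : M.Good H)
    {u : List (Ltr A)} (hu : M.Path M.q0 u M.q0) : FreeGroup.mk u ∈ H := by
  rw [← SetLike.mem_coe, ← h.lang]
  exact ⟨u, hu, rfl⟩

theorem Good.mem {M : Autom A} {H : Subgroup (FreeGroup A)} (h : M.Good H)
    {g : FreeGroup A} (hg : g ∈ H) : ∃ u, M.Path M.q0 u M.q0 ∧ FreeGroup.mk u = g := by
  rw [← SetLike.mem_coe, ← h.lang] at hg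
  exact hg

theorem Good.two {M : Autom A} {H : Subgroup (FreeGroup A)} (h : M.Good H) {p : M.Q}
    {u v : List (Ltr A)} (hu : M.Path M.q0 u p) (hv : M.Path M.q0 v p) :
    FreeGroup.mk u * (FreeGroup.mk v)⁻¹ ∈ H := by
  rw [FreeGroup.inv_mk, ← mk_append]
  exact h.loop (path_append hu (path_inv h.dual hv))

theorem Good.trim {M : Autom A} {H : Subgroup (FreeGroup A)} (h : M.Good H) : M.Trim := by
  intro q
  obtain ⟨u, hu⟩ := h.conn q
  exact ⟨u, _, hu, path_inv h.dual hu⟩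

theorem Represents.good {M : Autom A} {H : Subgroup (FreeGroup A)} (h : M.Represents H) :
    M.Good H :=
  ⟨h.1.2.2, fun q => by obtain ⟨u, v, h1, _⟩ := h.1.2.1 q; exact ⟨u, h1⟩, h.2.2⟩

theorem Good.core {M : Autom A} {H : Subgroup (FreeGroup A)} (h : M.Good H)
    (hdet : M.Deterministic) {r : FreeGroup A} (hr : r ∈ core H) :
    ∃ p u, M.Path M.q0 u p ∧ FreeGroup.mk u = r := by
  obtain ⟨x, hx, y, hy, V, ⟨T, hT⟩, rfl⟩ := hr
  obtain ⟨u, hu, rfl⟩ := h.mem hx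
  obtain ⟨v, hv, rfl⟩ := h.mem hy
  have h1 := path_nw hdet h.dual hv
  rw [← hT] at h1
  obtain ⟨p, hp, -⟩ := path_append_iff.1 h1
  exact ⟨p, u ++ V, path_append hu hp, mk_append _ _⟩

theorem path_hom {M N : Autom A} {φ : M.Q → N.Q}
    (h : ∀ p a q, (p, a, q) ∈ M.E → (φ p, a, φ q) ∈ N.E) {p q : M.Q} {u : List (Ltr A)}
    (hu : M.Path p u q) : N.Path (φ p) u (φ q) := by
  induction u generalizing p with
  | nil =>
    rw [path_nil_iff] at hu
    subst hu
    exact path_nil _ _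
  | cons a u ih =>
    obtain ⟨r, h1, h2⟩ := path_cons_iff.1 hu
    exact path_cons (h _ _ _ h1) (ih h2)

/-- the subgroup of a dual automaton -/
def langSub (M : Autom A) (hd : M.Dual) : Subgroup (FreeGroup A) where
  carrier := M.langRho
  one_mem' := ⟨[], path_nil M _, rfl⟩
  mul_mem' := by
    rintro _ _ ⟨u, hu, rfl⟩ ⟨v, hv, rfl⟩
    exact ⟨u ++ v, path_append hu hv, mk_append u v⟩
  inv_mem' := by
    rintro _ ⟨u, hu, rfl⟩
    exact ⟨_, path_inv hd hu, FreeGroup.inv_mk.symm⟩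

theorem Good.identify {M N : Autom A} {H : Subgroup (FreeGroup A)} (h : M.Good H) {p q : M.Q}
    (hN : M.IsIdentification p q N) {u v : List (Ltr A)} (hu : M.Path M.q0 u p)
    (hv : M.Path M.q0 v q) : N.Good (adj H (FreeGroup.mk u * (FreeGroup.mk v)⁻¹)) := by
  obtain ⟨φ, hsurj, h0, heq, hE⟩ := hN
  set t := FreeGroup.mk u * (FreeGroup.mk v)⁻¹ with ht
  have hhom : ∀ p a q, (p, a, q) ∈ M.E → (φ p, a, φ q) ∈ N.E :=
    fun p a q he => (hE _).2 ⟨_, he, rfl⟩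
  have hdual : N.Dual := by
    have : ∀ p a q, (p, a, q) ∈ N.E → (q, Ltr.inv a, p) ∈ N.E := by
      intro p a q he
      obtain ⟨⟨p', a', q'⟩, he', heq'⟩ := (hE _).1 he
      simp only [Prod.mk.injEq] at heq'
      obtain ⟨rfl, rfl, rfl⟩ := heq'
      exact hhom _ _ _ ((h.dual _ _ _).1 he')
    intro p a q
    refine ⟨this p a q, fun he => ?_⟩
    have := this _ _ _ he
    rwa [Ltr.inv_inv] at this
  have hpq : φ p = φ q := (heq p q).2 (Or.inr (Or.inl ⟨rfl, rfl⟩))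
  refine ⟨hdual, ?_, ?_⟩
  · intro x
    obtain ⟨y, rfl⟩ := hsurj x
    obtain ⟨w, hw⟩ := h.conn y
    exact ⟨w, h0 ▸ path_hom hhom hw⟩
  · apply Set.Subset.antisymm
    · -- comparison of two paths
      have two : ∀ x y X Y, M.Path M.q0 X x → M.Path M.q0 Y y → φ x = φ y →
          FreeGroup.mk X * (FreeGroup.mk Y)⁻¹ ∈ adj H t := by
        intro x y X Y hX hY hxy
        rcases (heq x y).1 hxy with rfl | ⟨rfl, rfl⟩ | ⟨rfl, rfl⟩
        · exact le_adj _ _ (h.two hX hY)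
        · have h1 := Subgroup.mul_mem _ (Subgroup.mul_mem _ (le_adj H t (h.two hX hu))
            (mem_adj H t)) (le_adj H t (h.two hv hY))
          rw [ht] at h1 ⊢
          convert h1 using 1
          group
        · have h1 := Subgroup.mul_mem _ (Subgroup.mul_mem _ (le_adj H t (h.two hX hv))
            (Subgroup.inv_mem _ (mem_adj H t))) (le_adj H t (h.two hu hY))
          rw [ht] at h1 ⊢
          convert h1 using 1
          group
      have key : ∀ (W : List (Ltr A)) (x : M.Q) (X : List (Ltr A)), N.Path N.q0 W (φ x) →
          M.Path M.q0 X x → FreeGroup.mk W * (FreeGroup.mk X)⁻¹ ∈ adj H t := by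
        intro W
        induction W using List.reverseRecOn with
        | nil =>
          intro x X hW hX
          rw [path_nil_iff, ← h0] at hW
          exact two M.q0 x [] X (path_nil _ _) hX hW
        | append_singleton W a ih =>
          intro x X hW hX
          obtain ⟨z, h1, h2⟩ := path_append_iff.1 hW
          rw [path_single] at h2
          obtain ⟨⟨y', a', y⟩, he', heq'⟩ := (hE _).1 h2
          simp only [Prod.mk.injEq] at heq'
          obtain ⟨rfl, rfl, h3⟩ := heq'
          obtain ⟨Y, hY⟩ := h.conn y'
          have h4 := ih y' Y h1 hY
          have h5 := two y x (Y ++ [a]) X (path_append hY (path_single.2 he')) hX h3.symm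
          have h6 := Subgroup.mul_mem _ h4 h5
          rw [mk_append] at h6 ⊢
          convert h6 using 1
          group
      rintro _ ⟨W, hW, rfl⟩
      have := key W M.q0 [] (by rw [h0]; exact hW) (path_nil _ _)
      simpa [mk_nil] using this
    · have : adj H t ≤ N.langSub hdual := by
        apply adj_le
        · intro g hg
          obtain ⟨w, hw, rfl⟩ := h.mem hg
          have := path_hom hhom hw
          rw [h0] at this
          exact ⟨w, this, rfl⟩
        · have h1 := path_hom hhom hu
          have h2 := path_inv hdual (path_hom hhom hv)
          rw [← hpq, h0] at h2
          rw [h0] at h1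
          exact ⟨_, path_append h1 h2, by rw [ht, FreeGroup.inv_mk, mk_append]⟩
      exact this

theorem Good.red1 {M N : Autom A} {H : Subgroup (FreeGroup A)} (h : M.Good H) (hN : Red1 M N) :
    N.Good H := by
  obtain ⟨p, q, r, a, _, h1, h2, hid⟩ := hN
  obtain ⟨u, hu⟩ := h.conn r
  have := h.identify hid (path_append hu (path_single.2 h1)) (path_append hu (path_single.2 h2))
  rwa [mul_inv_cancel, adj_mem_eq H.one_mem] at this

theorem Good.red1s {M N : Autom A} {H : Subgroup (FreeGroup A)} (h : M.Good H)
    (hN : Relation.ReflTransGen Red1 M N) : N.Good H := by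
  induction hN with
  | refl => exact h
  | tail _ hs ih => exact ih.red1 hs

theorem Good.red2 {M N : Autom A} {H : Subgroup (FreeGroup A)} (h : M.Good H)
    (hdet : M.Deterministic) (hN : Red2 M N) : N.Good H ∧ N.Deterministic := by
  obtain ⟨p, q, a, hq0, hpq, hqp, honly, φ, hinj, hrange, h0, hE⟩ := hN
  have hne : ∀ x, φ x ≠ q := by
    intro x
    have : φ x ∈ Set.range φ := ⟨x, rfl⟩
    rw [hrange] at this
    exact this
  have hlift : ∀ z, z ≠ q → ∃ x, φ x = z := by
    intro z hz
    have : z ∈ Set.range φ := by rw [hrange]; exact hz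
    exact this
  have hdet' : N.Deterministic := by
    intro x b y y' h1 h2
    exact hinj (hdet _ _ _ _ ((hE _).1 h1) ((hE _).1 h2))
  have hdual' : N.Dual := by
    intro x b y
    rw [hE, hE]
    exact h.dual _ _ _
  have hhom : ∀ x b y, (x, b, y) ∈ N.E → (φ x, b, φ y) ∈ M.E := fun x b y he => (hE _).1 he
  have hpath : ∀ (n : ℕ) (W : List (Ltr A)) (x y : N.Q), W.length ≤ n → FreeGroup.IsReduced W →
      M.Path (φ x) W (φ y) → N.Path x W y := by
    intro n
    induction n with
    | zero =>
      intro W x y hn _ hW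
      obtain rfl := List.length_eq_zero_iff.1 (Nat.le_zero.1 hn)
      rw [path_nil_iff] at *
      exact hinj hW
    | succ n ih =>
      intro W x y hn hr hW
      cases W with
      | nil =>
        rw [path_nil_iff] at *
        exact hinj hW
      | cons b W =>
        obtain ⟨z, h1, h2⟩ := path_cons_iff.1 hW
        by_cases hz : z = q
        · subst hz
          exfalso
          have h3 := honly _ h1 (Or.inr rfl)
          simp only [Prod.mk.injEq] at h3
          have h4 : φ x = p ∧ b = a := by
            rcases h3 with h3 | h3
            · exact ⟨h3.1, h3.2.1⟩
            · exact absurd h3.1 (hne x)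
          obtain ⟨h4, rfl⟩ := h4
          cases W with
          | nil =>
            rw [path_nil_iff] at h2
            exact hne y h2.symm
          | cons c W =>
            obtain ⟨z', h5, h6⟩ := path_cons_iff.1 h2
            have h7 := honly _ h5 (Or.inl rfl)
            simp only [Prod.mk.injEq] at h7
            have h8 : c = Ltr.inv b := by
              rcases h7 with h7 | h7
              · exact absurd (h4.trans h7.1.symm) (hne x)
              · exact h7.2.1
            subst h8
            have := red_sub (V := []) (W := [b, Ltr.inv b]) (T := W) (by simpa using hr)
            simp [FreeGroup.IsReduced, Ltr.inv] at this
        · obtain ⟨z', rfl⟩ := hlift z hz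
          refine path_cons ((hE _).2 h1) (ih W z' y (by simp at hn; omega) ?_ h2)
          exact red_sub (V := [b]) (T := []) (by simpa using hr)
  refine ⟨⟨hdual', ?_, ?_⟩, hdet'⟩
  · intro x
    obtain ⟨u, hu⟩ := h.conn (φ x)
    rw [← h0] at hu
    exact ⟨_, hpath _ _ _ _ le_rfl (nw_red _) (path_nw hdet h.dual hu)⟩
  · rw [← h.lang]
    apply Set.Subset.antisymm
    · rintro _ ⟨u, hu, rfl⟩
      have := path_hom hhom hu
      rw [h0] at this
      exact ⟨u, this, rfl⟩
    · rintro _ ⟨u, hu, rfl⟩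
      have hu' : M.Path M.q0 u M.q0 := hu
      rw [← h0] at hu'
      exact ⟨_, hpath _ _ _ _ le_rfl (nw_red _) (path_nw hdet h.dual hu'), mk_nw _⟩

theorem Good.red2s {M N : Autom A} {H : Subgroup (FreeGroup A)} (h : M.Good H)
    (hdet : M.Deterministic) (hN : Relation.ReflTransGen Red2 M N) :
    N.Good H ∧ N.Deterministic := by
  induction hN with
  | refl => exact ⟨h, hdet⟩
  | tail _ hs ih => exact ih.1.red2 ih.2 hs

theorem Good.iso {M N : Autom A} {H : Subgroup (FreeGroup A)} (h : M.Good H)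
    (hN : Isomorphic M N) : N.Good H := by
  obtain ⟨φ, h1, h2⟩ := hN
  have hE : ∀ p a q, (p, a, q) ∈ N.E ↔ (φ.symm p, a, φ.symm q) ∈ M.E := by
    intro p a q
    refine ⟨h2.2 p a q, fun he => ?_⟩
    simpa using h1.2 _ _ _ he
  refine ⟨?_, ?_, ?_⟩
  · intro p a q
    rw [hE, hE]; exact h.dual _ _ _
  · intro q
    obtain ⟨u, hu⟩ := h.conn (φ.symm q)
    have := path_hom h1.2 hu
    rw [h1.1] at this
    exact ⟨u, by simpa using this⟩
  · rw [← h.lang]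
    apply Set.Subset.antisymm
    · rintro _ ⟨u, hu, rfl⟩
      have := path_hom h2.2 hu
      rw [h2.1] at this
      exact ⟨u, this, rfl⟩
    · rintro _ ⟨u, hu, rfl⟩
      have := path_hom h1.2 hu
      rw [h1.1] at this
      exact ⟨u, this, rfl⟩

theorem Good.istep {M N : Autom A} {H : Subgroup (FreeGroup A)} (h : M.Good H)
    (hN : IStepAny M N) : ∃ t, N.Good (adj H t) := by
  obtain ⟨p, q, _, N', N'', hid, ⟨M₁, hr1, hdet, hr2, _⟩, hiso⟩ := hN
  obtain ⟨u, hu⟩ := h.conn p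
  obtain ⟨v, hv⟩ := h.conn q
  exact ⟨_, (((h.identify hid hu hv).red1s hr1).red2s hdet hr2).1.iso hiso⟩

end Autom

theorem emb_of_graphical {L K : Subgroup (FreeGroup A)} (h : GraphicalFF L K) : Emb L K := by
  obtain ⟨hLK, ML, MK, hML, hMK, ψ, hinj, hhom⟩ := h
  refine ⟨hLK, ?_⟩
  intro x hx y hy hxy
  obtain ⟨p, X, hX, rfl⟩ := hML.good.core hML.1.1 hx
  obtain ⟨q, Y, hY, rfl⟩ := hML.good.core hML.1.1 hy
  obtain ⟨W, hW, hW'⟩ := hMK.good.mem hxy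
  have h1 := Autom.path_hom hhom.2 hX
  have h2 := Autom.path_hom hhom.2 hY
  rw [hhom.1] at h1 h2
  have h3 := Autom.path_mk_det hMK.1.1 hMK.1.2.2 h1 (Autom.path_append hW h2) (by
    rw [mk_append, hW']; group)
  obtain rfl := hinj h3
  exact hML.good.two hX hY

end automata

/-! ### Part 8: existence of automata and reductions -/

section existence

variable {A : Type}

/-- the Stallings automaton -/
def Gam (L : Subgroup (FreeGroup A)) : Autom A where
  Q := {x : Cos L // ∃ g ∈ core L, cls L g = x}
  q0 := ⟨cls L 1, 1, (core_closed L).one, rfl⟩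
  E := {e | e.2.2.1 = rmul L (ltr e.2.1) e.1.1}

/-- the state of a core element -/
def gst (L : Subgroup (FreeGroup A)) (g : FreeGroup A) (hg : g ∈ core L) : (Gam L).Q :=
  ⟨cls L g, g, hg, rfl⟩

theorem gst_surj {L : Subgroup (FreeGroup A)} (x : (Gam L).Q) : ∃ g hg, x = gst L g hg := by
  obtain ⟨x, g, hg, rfl⟩ := x
  exact ⟨g, hg, rfl⟩

theorem gst_eq {L : Subgroup (FreeGroup A)} {g g' : FreeGroup A} {hg : g ∈ core L}
    {hg' : g' ∈ core L} : gst L g hg = gst L g' hg' ↔ g * g'⁻¹ ∈ L := by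
  rw [← cls_eq]
  exact Subtype.ext_iff

theorem gam_edge {L : Subgroup (FreeGroup A)} {g g' : FreeGroup A} {hg : g ∈ core L}
    {hg' : g' ∈ core L} {a : Ltr A} :
    (gst L g hg, a, gst L g' hg') ∈ (Gam L).E ↔ cls L g' = cls L (g * ltr a) := Iff.rfl

theorem gam_path {L : Subgroup (FreeGroup A)} {g : FreeGroup A} {hg : g ∈ core L}
    {u : List (Ltr A)} {x : (Gam L).Q} (h : (Gam L).Path (gst L g hg) u x) :
    x.1 = cls L (g * FreeGroup.mk u) := by
  induction u generalizing g with
  | nil =>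
    rw [Autom.path_nil_iff] at h
    subst h
    simp [mk_nil, gst]
  | cons a u ih =>
    obtain ⟨y, h1, h2⟩ := Autom.path_cons_iff.1 h
    obtain ⟨g', hg', rfl⟩ := gst_surj y
    rw [ih h2, mk_cons, ← mul_assoc]
    exact cls_mul_right (gam_edge.1 h1) _

theorem gam_path' {L : Subgroup (FreeGroup A)} {g g' : FreeGroup A} {hg : g ∈ core L}
    {hg' : g' ∈ core L} {u : List (Ltr A)} (h1 : ∀ V, V <+: u → g * FreeGroup.mk V ∈ core L)
    (h2 : cls L g' = cls L (g * FreeGroup.mk u)) :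
    (Gam L).Path (gst L g hg) u (gst L g' hg') := by
  induction u generalizing g with
  | nil =>
    rw [Autom.path_nil_iff]
    apply Subtype.ext
    simpa [mk_nil, gst] using h2.symm
  | cons a u ih =>
    have h3 : g * ltr a ∈ core L := h1 [a] ⟨u, rfl⟩
    refine Autom.path_cons (q := gst L _ h3) (gam_edge.2 rfl) (ih ?_ ?_)
    · intro V hV
      have := h1 (a :: V) (by rw [List.cons_prefix_cons]; exact ⟨rfl, hV⟩)
      rwa [mk_cons, ← mul_assoc] at this
    · rw [h2, mk_cons, ← mul_assoc]

theorem gam_represents (L : Subgroup (FreeGroup A)) : (Gam L).Represents L := by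
  have hdet : (Gam L).Deterministic := by
    intro p a q q' h h'
    apply Subtype.ext
    have h1 : q.1 = rmul L (ltr a) p.1 := h
    have h2 : q'.1 = rmul L (ltr a) p.1 := h'
    rw [h1, h2]
  have hdual : (Gam L).Dual := by
    have : ∀ p a q, (p, a, q) ∈ (Gam L).E → (q, Ltr.inv a, p) ∈ (Gam L).E := by
      intro p a q h
      obtain ⟨g, hg, rfl⟩ := gst_surj p
      obtain ⟨g', hg', rfl⟩ := gst_surj q
      rw [gam_edge] at *
      have := cls_mul_right h (ltr (Ltr.inv a))
      rw [ltr_inv] at *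
      rw [this]
      simp
    intro p a q
    refine ⟨this p a q, fun h => ?_⟩
    have := this _ _ _ h
    rwa [Ltr.inv_inv] at this
  have hloop : ∀ h ∈ L, ∀ V T, V ++ T = nw h → ∃ hV : FreeGroup.mk V ∈ core L,
      (Gam L).Path (Gam L).q0 V (gst L _ hV) ∧ (Gam L).Path (gst L _ hV) T (Gam L).q0 := by
    intro h hh V T hVT
    have hpre : ∀ W, W <+: nw h → FreeGroup.mk W ∈ core L :=
      (core_closed L).pre h ((core_closed L).sub hh)
    have hV := hpre V ⟨T, hVT⟩
    refine ⟨hV, ?_, ?_⟩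
    · apply gam_path' (g := 1) (hg := (core_closed L).one)
      · intro W hW
        rw [one_mul]
        exact hpre W (hW.trans ⟨T, hVT⟩)
      · rw [one_mul]
    · apply gam_path' (g' := 1) (hg' := (core_closed L).one)
      · rintro W ⟨S, hS⟩
        rw [← mk_append]
        exact hpre _ ⟨S, by rw [List.append_assoc, hS, hVT]⟩
      · rw [← mk_append, hVT, mk_nw, cls_eq, one_mul]
        exact L.inv_mem hh
  have hred : (Gam L).IsRed := by
    intro x
    obtain ⟨g, hg, rfl⟩ := gst_surj x
    obtain ⟨h, hh, h', hh', V, ⟨T, hT⟩, rfl⟩ := id hg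
    obtain ⟨hV, h1, h2⟩ := hloop h' hh' V T hT
    have : gst L _ hg = gst L _ hV := by rw [gst_eq, mul_inv_cancel_right]; exact hh
    rw [this]
    refine ⟨V, T, ?_, h1, h2⟩
    rw [Autom.isReducedWord_iff, hT]
    exact nw_red _
  refine ⟨⟨hdet, ?_, hdual⟩, hred, ?_⟩
  · intro q
    obtain ⟨u, v, _, h1, h2⟩ := hred q
    exact ⟨u, v, h1, h2⟩
  · apply Set.Subset.antisymm
    · rintro _ ⟨u, hu, rfl⟩
      have h1 : cls L 1 = cls L (1 * FreeGroup.mk u) :=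
        gam_path (g := 1) (hg := (core_closed L).one) hu
      rw [cls_eq, one_mul, one_mul, Subgroup.inv_mem_iff] at h1
      exact h1
    · intro h hh
      obtain ⟨hV, h1, h2⟩ := hloop h hh [] (nw h) rfl
      exact ⟨nw h, Autom.path_append h1 h2, mk_nw h⟩

theorem gam_finite (L : Subgroup (FreeGroup A)) (hL : L.FG) : Finite (Gam L).Q := by
  obtain ⟨S, hS⟩ := hL
  let F : Set (FreeGroup A) := insert 1 (⋃ s ∈ S, FreeGroup.mk '' {V | V <+: nw s})
  have hF : F.Finite := by
    apply Set.Finite.insert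
    apply Set.Finite.biUnion S.finite_toSet
    intro s _
    apply Set.Finite.image
    apply ((nw s).inits.finite_toSet).subset
    intro V hV
    exact (List.mem_inits V (nw s)).2 hV
  have hc : core L ⊆ {g | ∃ h ∈ L, ∃ f ∈ F, g = h * f} := by
    have hinv : ∀ h ∈ L, ∀ g ∈ {g | ∃ h ∈ L, ∃ f ∈ F, g = h * f},
        h * g ∈ {g | ∃ h ∈ L, ∃ f ∈ F, g = h * f} := by
      rintro x hx _ ⟨h, hh, f, hf, rfl⟩
      exact ⟨x * h, L.mul_mem hx hh, f, hf, by group⟩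
    apply core_subset hinv
    refine preIn_gen (D := {g | ∃ h ∈ L, ∃ f ∈ F, g = h * f})
      ⟨1, L.one_mem, 1, Set.mem_insert _ _, by simp⟩ hinv S hS ?_
    intro s hs
    refine ⟨nw s, mk_nw s, fun V hV => ⟨1, L.one_mem, _, Or.inr ?_, (one_mul _).symm⟩⟩
    simp only [Set.mem_iUnion]
    exact ⟨s, hs, V, hV, rfl⟩
  have hfin : ((fun f => cls L f) '' F).Finite := hF.image _
  have : Finite ((fun f => cls L f) '' F) := hfin
  let φ : (Gam L).Q → ((fun f => cls L f) '' F) := fun x => ⟨x.1, by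
    obtain ⟨g, hg, hx⟩ := x.2
    obtain ⟨h, hh, f, hf, rfl⟩ := hc hg
    exact ⟨f, hf, by rw [← hx, cls_mul_left hh]⟩⟩
  apply Finite.of_injective φ
  intro x y hxy
  apply Subtype.ext
  exact congrArg (fun z : ((fun f => cls L f) '' F) => z.1) hxy

theorem graphical_of_emb {L K : Subgroup (FreeGroup A)} (h : Emb L K) : GraphicalFF L K := by
  refine ⟨h.1, Gam L, Gam K, gam_represents L, gam_represents K, ?_⟩
  let F : Cos L → Cos K := Quotient.lift (fun g => cls K g) (by
    intro a b hab
    have h1 : cls L a = cls L b := Quotient.sound hab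
    rw [cls_eq] at h1 ⊢
    exact h.1 h1)
  have hF : ∀ g, F (cls L g) = cls K g := fun g => rfl
  refine ⟨fun x => ⟨F x.1, ?_⟩, ?_, ?_, ?_⟩
  · obtain ⟨g, hg, hx⟩ := x.2
    exact ⟨g, core_mono h.1 hg, by rw [← hx, hF]⟩
  · intro x y hxy
    obtain ⟨g, hg, rfl⟩ := gst_surj x
    obtain ⟨g', hg', rfl⟩ := gst_surj y
    have h1 : cls K g = cls K g' := congrArg Subtype.val hxy
    rw [cls_eq] at h1
    rw [gst_eq]
    exact h.2 _ hg _ hg' h1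
  · rfl
  · intro x a y hxy
    obtain ⟨g, hg, rfl⟩ := gst_surj x
    obtain ⟨g', hg', rfl⟩ := gst_surj y
    rw [gam_edge, cls_eq] at hxy
    change cls K g' = cls K (g * ltr a)
    rw [cls_eq]
    exact h.1 hxy

namespace Autom

theorem red_glue {U V : List (Ltr A)} {a : Ltr A} (h1 : FreeGroup.IsReduced (U ++ [a]))
    (h2 : FreeGroup.IsReduced (a :: V)) : FreeGroup.IsReduced (U ++ a :: V) := by
  unfold FreeGroup.IsReduced at *
  rw [List.isChain_split]
  exact ⟨h1, h2⟩

theorem red_cons {V : List (Ltr A)} {a b : Ltr A} (h : FreeGroup.IsReduced (b :: V))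
    (hab : b ≠ Ltr.inv a) : FreeGroup.IsReduced (a :: b :: V) := by
  unfold FreeGroup.IsReduced at *
  rw [List.isChain_cons_cons]
  refine ⟨?_, h⟩
  intro h1
  obtain ⟨a1, a2⟩ := a
  obtain ⟨b1, b2⟩ := b
  simp only [Ltr.inv] at *
  subst h1
  cases a2 <;> cases b2 <;> simp_all

/-- the concrete deletion -/
theorem exists_deletion (M : Autom A) (q : M.Q) (hq : q ≠ M.q0) :
    ∃ N : Autom A, M.IsDeletion q N :=
  ⟨⟨{x : M.Q // x ≠ q}, ⟨M.q0, hq.symm⟩, {e | (e.1.1, e.2.1, e.2.2.1) ∈ M.E}⟩,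
    Subtype.val, Subtype.val_injective, by simp, rfl, fun e => Iff.rfl⟩

theorem exists_identification (M : Autom A) (p q : M.Q) (hpq : p ≠ q) :
    ∃ N : Autom A, M.IsIdentification p q N := by
  classical
  let φ : M.Q → {x : M.Q // x ≠ q} := fun x => if h : x = q then ⟨p, hpq⟩ else ⟨x, h⟩
  refine ⟨⟨{x : M.Q // x ≠ q}, φ M.q0, {e | ∃ e' ∈ M.E, e = (φ e'.1, e'.2.1, φ e'.2.2)}⟩,
    φ, ?_, rfl, ?_, fun e => Iff.rfl⟩
  · rintro ⟨x, hx⟩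
    exact ⟨x, by simp [φ, hx]⟩
  · intro x y
    simp only [φ]
    split_ifs with h1 h2 h2
    · simp [h1, h2]
    · simp only [Subtype.mk.injEq]
      grind
    · simp only [Subtype.mk.injEq]
      grind
    · simp only [Subtype.mk.injEq]
      grind

theorem card_identification {M N : Autom A} {p q : M.Q} (hpq : p ≠ q) [Finite M.Q]
    (h : M.IsIdentification p q N) : Finite N.Q ∧ Nat.card N.Q < Nat.card M.Q := by
  obtain ⟨φ, h1, h2, h3, _⟩ := h
  have hf : Finite N.Q := Finite.of_surjective φ h1
  refine ⟨hf, lt_of_le_of_ne (Nat.card_le_card_of_surjective φ h1) ?_⟩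
  intro hc
  have : Bijective φ := (Nat.bijective_iff_surjective_and_card φ).2 ⟨h1, hc.symm⟩
  exact hpq (this.1 ((h3 p q).2 (Or.inr (Or.inl ⟨rfl, rfl⟩))))

theorem card_deletion {M N : Autom A} {q : M.Q} [Finite M.Q]
    (h : M.IsDeletion q N) : Finite N.Q ∧ Nat.card N.Q < Nat.card M.Q := by
  obtain ⟨φ, h1, h2, _⟩ := h
  have hf : Finite N.Q := Finite.of_injective φ h1
  refine ⟨hf, lt_of_le_of_ne (Nat.card_le_card_of_injective φ h1) ?_⟩
  intro hc
  have : Bijective φ := (Nat.bijective_iff_injective_and_card φ).2 ⟨h1, hc⟩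
  have h3 : q ∈ Set.range φ := this.2 q
  rw [h2] at h3
  exact h3 rfl

theorem exists_red1s (n : ℕ) : ∀ M : Autom A, Finite M.Q → Nat.card M.Q ≤ n →
    ∃ N, Relation.ReflTransGen Red1 M N ∧ N.Deterministic ∧ Finite N.Q := by
  induction n with
  | zero =>
    intro M hM hn
    have : Nonempty M.Q := ⟨M.q0⟩
    have := Nat.card_pos (α := M.Q)
    omega
  | succ n ih =>
    intro M hM hn
    by_cases hd : M.Deterministic
    · exact ⟨M, .refl, hd, hM⟩
    · unfold Deterministic at hd
      push Not at hd
      obtain ⟨r, a, p, q, h1, h2, hpq⟩ := hd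
      obtain ⟨N, hN⟩ := exists_identification M p q hpq
      obtain ⟨hf, hc⟩ := card_identification hpq hN
      obtain ⟨N', h3, h4⟩ := ih N hf (by omega)
      exact ⟨N', .head ⟨p, q, r, a, hpq, h1, h2, hN⟩ h3, h4⟩

theorem exists_red2s (n : ℕ) : ∀ M : Autom A, Finite M.Q → Nat.card M.Q ≤ n →
    ∃ N, Relation.ReflTransGen Red2 M N ∧ (∀ N', ¬ Red2 N N') ∧ Finite N.Q := by
  induction n with
  | zero =>
    intro M hM hn
    have : Nonempty M.Q := ⟨M.q0⟩
    have := Nat.card_pos (α := M.Q)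
    omega
  | succ n ih =>
    intro M hM hn
    by_cases hd : ∀ N', ¬ Red2 M N'
    · exact ⟨M, .refl, hd, hM⟩
    · push Not at hd
      obtain ⟨N, hN⟩ := hd
      obtain ⟨p, q, a, _, _, _, _, hdel⟩ := id hN
      obtain ⟨hf, hc⟩ := card_deletion hdel
      obtain ⟨N', h3, h4⟩ := ih N hf (by omega)
      exact ⟨N', .head hN h3, h4⟩

/-- another edge -/
theorem other_edge {M : Autom A} (hdu : M.Dual) (hdet : M.Deterministic)
    (hno : ∀ N, ¬ Red2 M N) {p q : M.Q} {a : Ltr A} (hq : q ≠ M.q0) (he : (p, a, q) ∈ M.E) :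
    ∃ b r, (q, b, r) ∈ M.E ∧ b ≠ Ltr.inv a := by
  by_contra hcon
  push Not at hcon
  obtain ⟨N, hN⟩ := exists_deletion M q hq
  have he' := (hdu _ _ _).1 he
  refine hno N ⟨p, q, a, hq, he, he', ?_, hN⟩
  rintro ⟨x, c, y⟩ hE (hx | hy)
  · simp only at hx
    subst hx
    have := hcon c y hE
    subst this
    rw [hdet _ _ _ _ hE he']
    exact Or.inr rfl
  · simp only at hy
    subst hy
    have hE' := (hdu _ _ _).1 hE
    have h1 := hcon _ _ hE'
    rw [h1] at hE'
    have h2 : c = a := by rw [← Ltr.inv_inv c, h1, Ltr.inv_inv]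
    rw [hdet _ _ _ _ hE' he', h2]
    exact Or.inl rfl

/-- on a reduced loop -/
def OnLoop (M : Autom A) (q : M.Q) : Prop :=
  ∃ u v, FreeGroup.IsReduced (u ++ v) ∧ M.Path M.q0 u q ∧ M.Path q v M.q0

/-- `u` is a shortest path to `q` -/
def Geo (M : Autom A) (u : List (Ltr A)) (q : M.Q) : Prop :=
  M.Path M.q0 u q ∧ ∀ v, M.Path M.q0 v q → u.length ≤ v.length

theorem exists_geo {M : Autom A} {H : Subgroup (FreeGroup A)} (h : M.Good H) (q : M.Q) :
    ∃ u, M.Geo u q := by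
  classical
  have hex : ∃ n, ∃ u, M.Path M.q0 u q ∧ u.length = n := by
    obtain ⟨u, hu⟩ := h.conn q
    exact ⟨_, u, hu, rfl⟩
  obtain ⟨u, hu, hn⟩ := Nat.find_spec hex
  refine ⟨u, hu, fun v hv => ?_⟩
  rw [hn]
  exact Nat.find_min' hex ⟨v, hv, rfl⟩

theorem Geo.red {M : Autom A} (hdet : M.Deterministic) (hdu : M.Dual) {q : M.Q}
    {u : List (Ltr A)} (h : M.Geo u q) : FreeGroup.IsReduced u := by
  have h1 := h.2 _ (path_nw hdet hdu h.1)
  have h2 : (nw (FreeGroup.mk u)).Sublist u := (red_nw u).sublist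
  have h3 := h2.eq_of_length_le h1
  rw [← h3]
  exact nw_red _

theorem onLoop_of {M : Autom A} {H : Subgroup (FreeGroup A)} (h : M.Good H)
    (hdet : M.Deterministic) (hno : ∀ N, ¬ Red2 M N) {q : M.Q} {U : List (Ltr A)}
    (hU : M.Geo U q)
    (hmax : ∀ r V, M.Geo V r → U.length < V.length → M.OnLoop r) : M.OnLoop q := by
  by_cases hq : q = M.q0
  · subst hq
    exact ⟨[], [], FreeGroup.IsReduced.nil, path_nil _ _, path_nil _ _⟩
  obtain ⟨U', a, rfl⟩ : ∃ U' a, U = U' ++ [a] := by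
    rcases List.eq_nil_or_concat U with rfl | ⟨U', a, rfl⟩
    · have := path_nil_iff.1 hU.1
      exact absurd this.symm hq
    · exact ⟨U', a, by simp⟩
  obtain ⟨p, hp, hpq⟩ := path_append_iff.1 hU.1
  rw [path_single] at hpq
  obtain ⟨b, r, hqr, hb⟩ := other_edge h.dual hdet hno hq hpq
  have hUr := hU.red hdet h.dual
  -- gluing
  have glue : ∀ Y, M.Path r Y M.q0 → FreeGroup.IsReduced (b :: Y) → M.OnLoop q := by
    intro Y hY hr
    refine ⟨U' ++ [a], b :: Y, ?_, hU.1, path_cons hqr hY⟩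
    rw [List.append_assoc]
    exact red_glue hUr (red_cons hr hb)
  have hrq := (h.dual _ _ _).1 hqr
  obtain ⟨V, hV⟩ := exists_geo h r
  by_cases hlen : (U' ++ [a]).length < V.length
  · obtain ⟨X, Y, hXY, hX, hY⟩ := hmax r V hV hlen
    cases Y with
    | nil => exact glue [] hY (by simp [FreeGroup.IsReduced])
    | cons c Y =>
      by_cases hc : c = Ltr.inv b
      · subst hc
        obtain ⟨q', h1, h2⟩ := path_cons_iff.1 hY
        obtain rfl := hdet _ _ _ _ h1 hrq
        exact ⟨X ++ [Ltr.inv b], Y, by simpa using hXY,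
          path_append hX (path_single.2 hrq), h2⟩
      · apply glue _ hY
        apply red_cons _ hc
        exact red_sub (V := X) (T := []) (by simpa using hXY)
  · have hVr := hV.red hdet h.dual
    have hVi := path_inv h.dual hV.1
    apply glue _ hVi
    have hred : FreeGroup.IsReduced (FreeGroup.invRev V) := red_invRev hVr
    rcases List.eq_nil_or_concat V with rfl | ⟨V', c, rfl⟩
    · simp [FreeGroup.IsReduced]
    · have hcat : FreeGroup.invRev (V'.concat c) = Ltr.inv c :: FreeGroup.invRev V' := by
        rw [List.concat_eq_append, FreeGroup.invRev_append]; rfl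
      rw [hcat] at hred ⊢
      apply red_cons hred
      intro hcb
      have hcb' : c = b := by rw [← Ltr.inv_inv c, hcb, Ltr.inv_inv]
      subst hcb'
      have h1 := hV.1
      rw [List.concat_eq_append] at h1
      obtain ⟨q', h2, h3⟩ := path_append_iff.1 h1
      rw [path_single] at h3
      obtain rfl := hdet _ _ _ _ ((h.dual _ _ _).1 h3) hrq
      have := hU.2 _ h2
      simp at this hlen
      omega

theorem isRed_of {M : Autom A} {H : Subgroup (FreeGroup A)} (h : M.Good H)
    (hdet : M.Deterministic) (hno : ∀ N, ¬ Red2 M N) [Finite M.Q] : M.IsRed := by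
  choose G hG using exists_geo h
  have hlen : ∀ q V, M.Geo V q → V.length = (G q).length := fun q V hV =>
    le_antisymm (hV.2 _ (hG q).1) ((hG q).2 _ hV.1)
  have hloop : ∀ q, M.OnLoop q := by
    by_contra hcon
    push Not at hcon
    obtain ⟨q1, hq1⟩ := hcon
    obtain ⟨q, hq, hmax⟩ := Set.exists_max_image {q | ¬ M.OnLoop q} (fun q => (G q).length)
      (Set.toFinite _) ⟨q1, hq1⟩
    apply hq
    apply onLoop_of h hdet hno (hG q)
    intro r V hV hlt
    by_contra hr
    have := hmax r hr
    rw [hlen r V hV] at hlt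
    omega
  intro q
  obtain ⟨u, v, h1, h2, h3⟩ := hloop q
  exact ⟨u, v, (isReducedWord_iff _).2 h1, h2, h3⟩

theorem exists_istep {M : Autom A} {L : Subgroup (FreeGroup A)} (hM : M.Represents L)
    [Finite M.Q] {r s : FreeGroup A} (hr : r ∈ _root_.core L) (hs : s ∈ _root_.core L)
    (hrs : r * s⁻¹ ∉ L) :
    ∃ N : Autom A, Finite N.Q ∧ IStepAny M N ∧ N.Represents (adj L (r * s⁻¹)) := by
  have hg := hM.good
  obtain ⟨p, u, hu, rfl⟩ := hg.core hM.1.1 hr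
  obtain ⟨q, v, hv, rfl⟩ := hg.core hM.1.1 hs
  have hpq : p ≠ q := by
    rintro rfl
    exact hrs (hg.two hu hv)
  obtain ⟨N', hN'⟩ := exists_identification M p q hpq
  obtain ⟨hf', _⟩ := card_identification hpq hN'
  have hg' := hg.identify hN' hu hv
  obtain ⟨M₁, h1, h2, hf1⟩ := exists_red1s _ N' hf' le_rfl
  obtain ⟨N, h3, h4, hf⟩ := exists_red2s _ M₁ hf1 le_rfl
  obtain ⟨hg2, hd2⟩ := (hg'.red1s h1).red2s h2 h3
  refine ⟨N, hf, ⟨p, q, hpq, N', N, hN', ⟨M₁, h1, h2, h3, h4⟩, Equiv.refl _, ?_, ?_⟩, ?_⟩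
  · exact ⟨rfl, fun _ _ _ h => h⟩
  · exact ⟨rfl, fun _ _ _ h => h⟩
  · exact ⟨⟨hd2, hg2.trim, hg2.dual⟩, isRed_of hg2 hd2 h4, hg2.lang⟩

end Autom

theorem gen_snoc {t : FreeGroup A} : ∀ {k : ℕ} {L K : Subgroup (FreeGroup A)}, Gen k L K →
    Gen (k + 1) L (adj K t)
  | 0, L, K, h => ⟨t, by cases h; rfl⟩
  | k + 1, L, K, h => by
    obtain ⟨s, hs⟩ := h
    exact ⟨s, gen_snoc hs⟩

theorem exists_chain (k : ℕ) : ∀ (M : Autom A) (L K : Subgroup (FreeGroup A)), Finite M.Q →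
    M.Represents L → Gen k L K → ∃ j ≤ k, ∃ (f : ℕ → Autom A) (L' : Subgroup (FreeGroup A)),
      f 0 = M ∧ (f j).Represents L' ∧ (∀ i < j, Autom.IStepAny (f i) (f (i + 1))) ∧
      Gen j L L' ∧ Gen (k - j) L' K ∧ Emb L' K := by
  induction k with
  | zero =>
    intro M L K _ hM hg
    have : L = K := hg
    subst this
    exact ⟨0, le_rfl, fun _ => M, L, rfl, hM, by simp, rfl, rfl, Emb.refl L⟩
  | succ k ih =>
    intro M L K hfin hM hg
    by_cases hE : Emb L K
    · exact ⟨0, Nat.zero_le _, fun _ => M, L, rfl, hM, by simp, rfl, hg, hE⟩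
    · obtain ⟨k', hk', r, hr, s, hs, hrs, hg'⟩ := key_step _ hg hE
      obtain rfl : k = k' := by omega
      obtain ⟨N, hNf, hstep, hN⟩ := Autom.exists_istep hM hr hs hrs
      obtain ⟨j, hj, f, L', h0, h1, h2, h3, h4, h5⟩ := ih N _ K hNf hN hg'
      refine ⟨j + 1, by omega, fun i => Nat.casesOn i M f, L', rfl, h1, ?_, ⟨_, h3⟩, ?_, h5⟩
      · intro i hi
        cases i with
        | zero => simpa [h0] using hstep
        | succ i => exact h2 i (by omega)
      · rwa [Nat.add_sub_add_right]

theorem main_iff (H K : Subgroup (FreeGroup A)) (hHfg : H.FG) (hKfg : K.FG)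
    (d : ℕ) (hrank : rk K = rk H + d) :
    FreeFactor H K ↔
      ∃ d' ≤ d, ∃ (f : ℕ → Autom A) (L : Subgroup (FreeGroup A)),
        (f 0).Represents H ∧ (f d').Represents L ∧
        (∀ i < d', Autom.IStepAny (f i) (f (i + 1))) ∧
        rk L = rk H + d' ∧ GraphicalFF L K := by
  constructor
  · intro hff
    have hg := gen_of_freeFactor hKfg hff d hrank
    obtain ⟨j, hj, f, L, h0, h1, h2, h3, h4, h5⟩ :=
      exists_chain d (Gam H) H K (gam_finite H hHfg) (gam_represents H) hg
    obtain ⟨h6, _, h7⟩ := gen_basis_aux hHfg h3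
    obtain ⟨h8, _⟩ := gen_basis_aux h7 h4
    exact ⟨j, hj, f, L, by rw [h0]; exact gam_represents H, h1, h2, by omega,
      graphical_of_emb h5⟩
  · rintro ⟨j, hj, f, L, h0, h1, h2, hr, h3⟩
    have hind : ∀ i ≤ j, ∃ Hi, (f i).Good Hi ∧ Gen i H Hi := by
      intro i
      induction i with
      | zero => exact fun _ => ⟨H, h0.good, rfl⟩
      | succ i ih =>
        intro hi
        obtain ⟨Hi, hg, hG⟩ := ih (by omega)
        obtain ⟨t, ht⟩ := hg.istep (h2 i (by omega))
        exact ⟨_, ht, gen_snoc hG⟩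
    obtain ⟨L', hg, hG⟩ := hind j le_rfl
    have hL : L' = L := SetLike.coe_injective (hg.lang.symm.trans h1.2.2)
    subst hL
    exact freeFactor_trans hKfg ((gen_basis_aux hHfg hG).2.1 (by omega))
      (emb_freeFactor (emb_of_graphical h3))

end existence

/-- Corollary 3.2: with `d = rank K - rank H > 0`, `H ≤ff K` iff `Γ_A(H)` can be
transformed by `d' ≤ d` i-steps into `Γ_A(L)` for some `L` with
`rank L = rank H + d'` which is a graphical free factor of `K`. -/
theorem free_factor_iff_isteps_to_graphical
    {A : Type} (H K : Subgroup (FreeGroup A)) (hHfg : H.FG) (hKfg : K.FG)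
    (d : ℕ) (hd : 0 < d) (hrank : rk K = rk H + d) :
    FreeFactor H K ↔
      ∃ d' ≤ d, ∃ (f : ℕ → Autom A) (L : Subgroup (FreeGroup A)),
        (f 0).Represents H ∧ (f d').Represents L ∧
        (∀ i < d', Autom.IStepAny (f i) (f (i + 1))) ∧
        rk L = rk H + d' ∧ GraphicalFF L K := by
  exact main_iff H K hHfg hKfg d hrank
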